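/- Fix Ω₀ > 0 and set Ω(ε) = Ω₀/ε. There exist a constant C = C(Ω₀) and ε₀ > 0 such that for all 0 < ε < ε₀ the GP ground-state energy satisfies E^TF ≤ ε² · E^GP_{ε,Ω(ε)} ≤ E^TF + C ε|log ε|, where E^TF is the Thomas–Fermi ground-state energy associated with Ω₀. In particular ε² E^GP_{ε,Ω₀/ε} = E^TF + O(ε|log ε|) as ε → 0. -/

import Mathlib

open MeasureTheory Real Filter

noncomputable section

/-- Points of the plane. -/
abbrev Pt : Type := EuclideanSpace ℝ (Fin 2)

/-- The open unit disc. -/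
def B1 : Set Pt := Metric.ball 0 1

/-- First partial derivative of a complex-valued function. -/
def pd1 (Ψ : Pt → ℂ) (x : Pt) : ℂ := fderiv ℝ Ψ x (EuclideanSpace.single 0 1)

/-- Second partial derivative of a complex-valued function. -/
def pd2 (Ψ : Pt → ℂ) (x : Pt) : ℂ := fderiv ℝ Ψ x (EuclideanSpace.single 1 1)

/-- Angular momentum operator `L = -i (x₁ ∂₂ - x₂ ∂₁)`. -/
def angMom (Ψ : Pt → ℂ) (x : Pt) : ℂ :=
  -Complex.I * ((x 0 : ℂ) * pd2 Ψ x - (x 1 : ℂ) * pd1 Ψ x)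

/-- The Gross-Pitaevskii energy density `|∇Ψ|² - Ω conj(Ψ) LΨ + |Ψ|⁴/ε²`. -/
def gpDensity (ε Ω : ℝ) (Ψ : Pt → ℂ) (x : Pt) : ℝ :=
  ‖pd1 Ψ x‖ ^ 2 + ‖pd2 Ψ x‖ ^ 2
    - Ω * (starRingEnd ℂ (Ψ x) * angMom Ψ x).re
    + ‖Ψ x‖ ^ 4 / ε ^ 2

/-- The Gross-Pitaevskii functional on the unit disc. -/
def gpEnergy (ε Ω : ℝ) (Ψ : Pt → ℂ) : ℝ := ∫ x in B1, gpDensity ε Ω Ψ x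

/-- Admissible (H¹, normalized) wave functions. -/
def gpAdm (Ψ : Pt → ℂ) : Prop :=
  DifferentiableOn ℝ Ψ B1 ∧
  IntegrableOn (fun x => ‖Ψ x‖ ^ 2) B1 ∧
  IntegrableOn (fun x => ‖pd1 Ψ x‖ ^ 2 + ‖pd2 Ψ x‖ ^ 2) B1 ∧
  IntegrableOn (fun x => ‖Ψ x‖ ^ 4) B1 ∧
  IntegrableOn (fun x => (starRingEnd ℂ (Ψ x) * angMom Ψ x).re) B1 ∧
  (∫ x in B1, ‖Ψ x‖ ^ 2) = 1

/-- The GP ground-state energy: infimum of the functional over normalized functions. -/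
def gpGround (ε Ω : ℝ) : ℝ := sInf {E | ∃ Ψ : Pt → ℂ, gpAdm Ψ ∧ E = gpEnergy ε Ω Ψ}

/-- A GP minimizer: a normalized admissible function attaining the infimum. -/
def IsGPMinimizer (ε Ω : ℝ) (Ψ : Pt → ℂ) : Prop :=
  gpAdm Ψ ∧ gpEnergy ε Ω Ψ = gpGround ε Ω

/-- The Thomas-Fermi functional. -/
def tfEnergy (Ω₀ : ℝ) (ρ : Pt → ℝ) : ℝ :=
  ∫ x in B1, ((ρ x) ^ 2 - Ω₀ ^ 2 * ‖x‖ ^ 2 * ρ x / 4)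

/-- Admissible TF densities: nonnegative, in L²(B₁), of total mass one. -/
def tfAdm (ρ : Pt → ℝ) : Prop :=
  IntegrableOn ρ B1 ∧ IntegrableOn (fun x => (ρ x) ^ 2) B1 ∧
  (∀ᵐ x ∂(volume.restrict B1), 0 ≤ ρ x) ∧ (∫ x in B1, ρ x) = 1

/-- The TF ground-state energy. -/
def tfGround (Ω₀ : ℝ) : ℝ := sInf {E | ∃ ρ : Pt → ℝ, tfAdm ρ ∧ E = tfEnergy Ω₀ ρ}

/-- Radius of the TF "hole". -/
def R0 (Ω₀ : ℝ) : ℝ := Real.sqrt (1 - 4 / (Real.sqrt π * Ω₀))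

/-- The TF minimizer. -/
def rhoTF (Ω₀ : ℝ) (x : Pt) : ℝ :=
  if Ω₀ ≤ 4 / Real.sqrt π then 1 / π - Ω₀ ^ 2 / 16 * (1 - 2 * ‖x‖ ^ 2)
  else max 0 (Ω₀ ^ 2 / 8 * (‖x‖ ^ 2 - 1) + Ω₀ / (2 * Real.sqrt π))

/-!
The energy density is `|(∇ - iA)Ψ|² - Ω²|x|²|Ψ|²/4 + |Ψ|⁴/ε²` for the vector potential
`A = Ω(-x₂, x₁)/2`. With `Ω = Ω₀/ε`, dropping the covariant gradient leaves `ε⁻²` times the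
Thomas-Fermi functional of `|Ψ|²`, hence the lower bound.

For the upper bound, take a smoothed square root of the Thomas-Fermi density times
`v / √(|v|² + ε)`, where `v` is a quasi-periodic function with one vortex per cell of a square
lattice of area `2π/Ω`. As `|(∇ - iA)v|² ≤ cΩ`, the kinetic energy is at most a constant times
`Ω ∫ 1/(|v|² + ε)`, and the integral is `O(|log ε|)` because `|v|²` vanishes quadratically at the
vortices. Minimality of the Thomas-Fermi density is used only through its Euler-Lagrange equation:
for every chemical potential `l` with Euler-Lagrange solution `T`, the number `l - ∫ T₊²` is a lower
bound for the Thomas-Fermi energy, and the trial function attains it up to `O(ε |log ε|)` when `l`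
is tuned to give it mass one.
-/

open scoped Topology RealInnerProductSpace

/-! ### Covariant derivatives -/

section CovDeriv

variable {E : Type*} [NormedAddCommGroup E] [NormedSpace ℝ E]
  {A B : E → E →L[ℝ] ℝ} {u v : E → ℂ} {x : E}

/-- The covariant derivative `∇Ψ - iAΨ` of a wave function in the magnetic potential `A`. A
potential is encoded as a one-form, so that no inner product is needed. -/
def covDeriv (A : E → E →L[ℝ] ℝ) (Ψ : E → ℂ) (x : E) : E →L[ℝ] ℂ :=
  fderiv ℝ Ψ x - (A x).smulRight (Complex.I * Ψ x)

lemma covDeriv_apply (A : E → E →L[ℝ] ℝ) (Ψ : E → ℂ) (x e : E) :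
    covDeriv A Ψ x e = fderiv ℝ Ψ x e - A x e * (Complex.I * Ψ x) := by
  simp [covDeriv]

lemma covDeriv_congr (h : u =ᶠ[𝓝 x] v) : covDeriv A u x = covDeriv A v x := by
  rw [covDeriv, covDeriv, h.fderiv_eq, h.eq_of_nhds]

lemma covDeriv_smul {s : E → ℝ} (hs : DifferentiableAt ℝ s x) (hu : DifferentiableAt ℝ u x) :
    covDeriv A (fun y => s y • u y) x =
      s x • covDeriv A u x + (fderiv ℝ s x).smulRight (u x) := by
  ext e
  rw [covDeriv_apply, fderiv_fun_smul hs hu]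
  simp only [covDeriv_apply, add_apply, smul_apply, ContinuousLinearMap.smulRight_apply,
    Complex.real_smul]
  ring

lemma norm_covDeriv_smul_le {s : E → ℝ} (hs : DifferentiableAt ℝ s x)
    (hu : DifferentiableAt ℝ u x) :
    ‖covDeriv A (fun y => s y • u y) x‖ ≤
      |s x| * ‖covDeriv A u x‖ + ‖fderiv ℝ s x‖ * ‖u x‖ := by
  rw [covDeriv_smul hs hu]
  refine (norm_add_le _ _).trans_eq ?_
  rw [norm_smul, norm_eq_abs, ContinuousLinearMap.norm_smulRight_apply]

lemma covDeriv_polar_apply {r θ : E → ℝ} {r' θ' : E →L[ℝ] ℝ} (hr : HasFDerivAt r r' x)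
    (hθ : HasFDerivAt θ θ' x) (e : E) :
    covDeriv A (fun y => r y • Complex.exp (θ y * Complex.I)) x e =
      (r' e + r x * (θ' e - A x e) * Complex.I) * Complex.exp (θ x * Complex.I) := by
  have hexp : HasFDerivAt (fun y => Complex.exp (θ y * Complex.I)) _ x :=
    ((Complex.ofRealCLM.hasFDerivAt.comp x hθ).mul_const Complex.I).cexp
  rw [covDeriv_smul hr.differentiableAt hexp.differentiableAt, hr.fderiv]
  simp only [covDeriv_apply, hexp.fderiv, add_apply, smul_apply, Complex.real_smul, smul_eq_mul,
    ContinuousLinearMap.smulRight_apply, ContinuousLinearMap.comp_apply,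
    Complex.ofRealCLM_apply, Function.comp_apply]
  ring

lemma covDeriv_comp_smul {c : ℝ} (hAB : A x = c • B (c • x)) :
    covDeriv A (fun y => u (c • y)) x = c • covDeriv B u (c • x) := by
  ext e
  simp only [covDeriv_apply, fderiv_comp_smul, hAB, smul_apply, Complex.real_smul, smul_eq_mul,
    Complex.ofReal_mul]
  ring

lemma covDeriv_finset_sum {ι : Type*} {f : ι → E → ℂ} (s : Finset ι)
    (hf : ∀ i ∈ s, DifferentiableAt ℝ (f i) x) :
    covDeriv A (fun y => ∑ i ∈ s, f i y) x = ∑ i ∈ s, covDeriv A (f i) x := by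
  ext e
  simp only [covDeriv_apply, fderiv_fun_sum hf, sum_apply, Finset.mul_sum,
    Finset.sum_sub_distrib]

lemma covDeriv_finsum {ι : Type*} {f : ι → E → ℂ} (hf : ∀ i, DifferentiableAt ℝ (f i) x)
    (hlf : LocallyFinite fun i => Function.support (f i)) :
    covDeriv A (fun y => ∑ᶠ i, f i y) x = ∑ᶠ i, covDeriv A (f i) x := by
  obtain ⟨s, hs⟩ := hlf.exists_finset_support x
  have hsum : (fun y => ∑ᶠ i, f i y) =ᶠ[𝓝 x] fun y => ∑ i ∈ s, f i y :=
    hs.mono fun y hy => finsum_eq_sum_of_support_subset _ hy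
  have hzero (i : ι) (hi : i ∉ s) : covDeriv A (f i) x = 0 := by
    have h0 : f i =ᶠ[𝓝 x] fun _ => 0 :=
      hs.mono fun y hy => by_contra fun hne => hi (hy hne)
    rw [covDeriv_congr h0]
    simp [covDeriv]
  rw [covDeriv_congr hsum, covDeriv_finset_sum s fun i _ => hf i]
  exact (finsum_eq_sum_of_support_subset _ fun i hi => by_contra fun hi' => hi (hzero i hi')).symm

lemma inner_covDeriv_self (A : E → E →L[ℝ] ℝ) (v : E → ℂ) (x e : E) :
    ⟪v x, covDeriv A v x e⟫ = ⟪v x, fderiv ℝ v x e⟫ := by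
  simp only [covDeriv_apply, Complex.inner, Complex.sub_re, Complex.sub_im, Complex.mul_re,
    Complex.mul_im, Complex.conj_re, Complex.conj_im, Complex.ofReal_re, Complex.ofReal_im,
    Complex.I_re, Complex.I_im]
  ring

/-! ### The regularized sign -/

/-- The smooth approximation `z / √(|z|² + δ)` of the complex sign `z / |z|`. -/
def regSign (δ : ℝ) (z : ℂ) : ℂ := (√(‖z‖ ^ 2 + δ))⁻¹ • z

variable {δ : ℝ}

lemma norm_regSign_sq (hδ : 0 ≤ δ) (z : ℂ) : ‖regSign δ z‖ ^ 2 = ‖z‖ ^ 2 / (‖z‖ ^ 2 + δ) := by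
  rw [regSign, norm_smul, mul_pow, norm_eq_abs, sq_abs, inv_pow, sq_sqrt (by positivity),
    inv_mul_eq_div]

lemma norm_regSign_sq_eq_one_sub (hδ : 0 < δ) (z : ℂ) :
    ‖regSign δ z‖ ^ 2 = 1 - δ * (‖z‖ ^ 2 + δ)⁻¹ := by
  rw [norm_regSign_sq hδ.le]
  field_simp
  ring

lemma norm_regSign_le_one (hδ : 0 ≤ δ) (z : ℂ) : ‖regSign δ z‖ ≤ 1 := by
  rw [← sq_le_one_iff₀ (norm_nonneg _), norm_regSign_sq hδ]
  exact div_le_one_of_le₀ (by linarith) (by positivity)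

lemma contDiff_regSign (hδ : 0 < δ) {n : WithTop ℕ∞} : ContDiff ℝ n (regSign δ) := by
  have hpos (z : ℂ) : 0 < ‖z‖ ^ 2 + δ := by positivity
  have hsqrt : ContDiff ℝ n fun z : ℂ => (√(‖z‖ ^ 2 + δ))⁻¹ :=
    (((contDiff_norm_sq ℝ).add contDiff_const).sqrt fun z => (hpos z).ne').inv
      fun z => (sqrt_pos.2 (hpos z)).ne'
  exact hsqrt.smul contDiff_id

lemma hasFDerivAt_inv_sqrt_norm_sq_add {F : Type*} [NormedAddCommGroup F]
    [InnerProductSpace ℝ F] {f : E → F} {f' : E →L[ℝ] F} (hδ : 0 < δ) (hf : HasFDerivAt f f' x) :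
    HasFDerivAt (fun y => (√(‖f y‖ ^ 2 + δ))⁻¹)
      (-(√(‖f x‖ ^ 2 + δ) ^ 3)⁻¹ • (innerSL ℝ (f x)).comp f') x := by
  have hpos : 0 < ‖f x‖ ^ 2 + δ := by positivity
  have hsqrt : 0 < √(‖f x‖ ^ 2 + δ) := sqrt_pos.2 hpos
  have houter := (hasDerivAt_sqrt hpos.ne').inv hsqrt.ne'
  refine (houter.comp_hasFDerivAt x (hf.norm_sq.add_const δ)).congr_fderiv ?_
  rw [← Nat.cast_smul_eq_nsmul ℝ, smul_smul]
  congr 1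
  push_cast
  field_simp

lemma norm_fderiv_inv_sqrt_norm_sq_add_le (A : E → E →L[ℝ] ℝ) (hδ : 0 < δ)
    (hv : DifferentiableAt ℝ v x) :
    ‖fderiv ℝ (fun y => (√(‖v y‖ ^ 2 + δ))⁻¹) x‖ * ‖v x‖ ≤
      ‖covDeriv A v x‖ / √(‖v x‖ ^ 2 + δ) := by
  rw [(hasFDerivAt_inv_sqrt_norm_sq_add hδ hv.hasFDerivAt).fderiv]
  set R : ℝ := √(‖v x‖ ^ 2 + δ)
  have hpos : 0 < ‖v x‖ ^ 2 + δ := by positivity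
  have hR : 0 < R := sqrt_pos.2 hpos
  have hinner : ‖(innerSL ℝ (v x)).comp (fderiv ℝ v x)‖ ≤ ‖v x‖ * ‖covDeriv A v x‖ := by
    refine ContinuousLinearMap.opNorm_le_bound _ (by positivity) fun e => ?_
    rw [ContinuousLinearMap.comp_apply, innerSL_apply_apply, ← inner_covDeriv_self A, mul_assoc]
    exact (norm_inner_le_norm _ _).trans (by gcongr; exact (covDeriv A v x).le_opNorm e)
  calc ‖-(R ^ 3)⁻¹ • (innerSL ℝ (v x)).comp (fderiv ℝ v x)‖ * ‖v x‖
      ≤ (R ^ 3)⁻¹ * (‖v x‖ * ‖covDeriv A v x‖) * ‖v x‖ := by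
        rw [norm_smul, norm_neg, norm_of_nonneg (by positivity)]
        gcongr
    _ = ‖v x‖ ^ 2 / R ^ 2 * (‖covDeriv A v x‖ / R) := by field_simp
    _ ≤ ‖covDeriv A v x‖ / R := by
        refine mul_le_of_le_one_left (by positivity) ?_
        rw [sq_sqrt hpos.le]
        exact div_le_one_of_le₀ (by linarith) hpos.le

lemma norm_covDeriv_regSign_comp_le (A : E → E →L[ℝ] ℝ) (hδ : 0 < δ)
    (hv : DifferentiableAt ℝ v x) :
    ‖covDeriv A (fun y => regSign δ (v y)) x‖ ≤
      2 * (‖covDeriv A v x‖ / √(‖v x‖ ^ 2 + δ)) := by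
  have hinv : DifferentiableAt ℝ (fun y => (√(‖v y‖ ^ 2 + δ))⁻¹) x :=
    (hasFDerivAt_inv_sqrt_norm_sq_add hδ hv.hasFDerivAt).differentiableAt
  have hmul := norm_covDeriv_smul_le (A := A) hinv hv
  rw [abs_of_nonneg (by positivity), inv_mul_eq_div] at hmul
  have hdia := norm_fderiv_inv_sqrt_norm_sq_add_le A hδ hv
  unfold regSign
  linarith

lemma norm_covDeriv_smul_regSign_sq_le (A : E → E →L[ℝ] ℝ) (hδ : 0 < δ) {s : E → ℝ}
    (hs : DifferentiableAt ℝ s x) (hv : DifferentiableAt ℝ v x) :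
    ‖covDeriv A (fun y => s y • regSign δ (v y)) x‖ ^ 2 ≤
      2 * ‖fderiv ℝ s x‖ ^ 2 + 8 * s x ^ 2 * ‖covDeriv A v x‖ ^ 2 / (‖v x‖ ^ 2 + δ) := by
  have hsign : DifferentiableAt ℝ (fun y => regSign δ (v y)) x :=
    ((contDiff_regSign hδ (n := 1)).differentiable one_ne_zero _).comp x hv
  have hbound : ‖covDeriv A (fun y => s y • regSign δ (v y)) x‖ ≤
      |s x| * (2 * (‖covDeriv A v x‖ / √(‖v x‖ ^ 2 + δ))) + ‖fderiv ℝ s x‖ * 1 := by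
    refine (norm_covDeriv_smul_le hs hsign).trans ?_
    gcongr
    exacts [norm_covDeriv_regSign_comp_le A hδ hv, norm_regSign_le_one hδ.le _]
  refine (pow_le_pow_left₀ (norm_nonneg _) hbound 2).trans (add_sq_le.trans_eq ?_)
  rw [mul_pow, mul_pow, div_pow, sq_abs, sq_sqrt (by positivity)]
  ring

end CovDeriv

/-! ### The vortex lattice -/

lemma hasDerivAt_indicator {F : Type*} [NormedAddCommGroup F] [NormedSpace ℝ F] {s : Set ℝ}
    {f f' : ℝ → F} (hs : IsClosed s) (hf : ∀ t ∈ s, HasDerivAt f (f' t) t)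
    (hfront : ∀ t ∈ frontier s, f t = 0 ∧ f' t = 0) (t : ℝ) :
    HasDerivAt (s.indicator f) (s.indicator f' t) t := by
  by_cases hts : t ∈ s
  swap
  · rw [Set.indicator_of_notMem hts]
    refine (hasDerivAt_const t (0 : F)).congr_of_eventuallyEq ?_
    exact eventually_of_mem (hs.isOpen_compl.mem_nhds hts) fun y hy => Set.indicator_of_notMem hy f
  rw [Set.indicator_of_mem hts]
  by_cases hti : t ∈ interior s
  · refine (hf t hts).congr_of_eventuallyEq ?_
    exact eventually_of_mem (mem_interior_iff_mem_nhds.1 hti) fun y hy => Set.indicator_of_mem hy f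
  obtain ⟨hf0, hf0'⟩ := hfront t ⟨subset_closure hts, hti⟩
  have hlittle := hasDerivAt_iff_isLittleO.1 (hf t hts)
  rw [hf0'] at hlittle ⊢
  have hbound : (fun y => s.indicator f y - s.indicator f t - (y - t) • (0 : F)) =O[𝓝 t]
      fun y => f y - f t - (y - t) • (0 : F) :=
    .of_bound' <| Eventually.of_forall fun y => by
      simpa [Set.indicator_of_mem hts, hf0] using norm_indicator_le_norm_self f y
  exact hasDerivAt_iff_isLittleO.2 (hbound.trans_isLittleO hlittle)

lemma finsum_int_eq_add {M : Type*} [AddCommMonoid M] {f : ℤ → M} {y : ℝ}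
    (hf : ∀ n : ℤ, 1 ≤ |y - n| → f n = 0) : ∑ᶠ n, f n = f ⌊y⌋ + f (⌊y⌋ + 1) := by
  rw [finsum_eq_sum_of_support_subset (s := {⌊y⌋, ⌊y⌋ + 1}) _ fun n hn => ?_,
    Finset.sum_pair (by simp)]
  have hlt : |y - n| < 1 := not_le.1 fun h => hn (hf n h)
  rw [abs_lt] at hlt
  have hle : ⌊y⌋ < n + 1 := Int.floor_lt.2 (by push_cast; linarith)
  have hge : n - 1 ≤ ⌊y⌋ := Int.le_floor.2 (by push_cast; linarith)
  simp only [Finset.coe_insert, Finset.coe_singleton, Set.mem_insert_iff, Set.mem_singleton_iff]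
  omega

/-- The raised cosine on `[-1, 1]`, extended by zero. Its integer translates form a `C¹` partition
of unity. -/
def cosBump : ℝ → ℝ := (Set.Icc (-1) 1).indicator fun t => (1 + cos (π * t)) / 2

lemma cosBump_of_abs_le_one {t : ℝ} (ht : |t| ≤ 1) : cosBump t = (1 + cos (π * t)) / 2 :=
  Set.indicator_of_mem (s := Set.Icc (-1) 1) (abs_le.1 ht) _

lemma cosBump_of_one_le_abs {t : ℝ} (ht : 1 ≤ |t|) : cosBump t = 0 := by
  rcases ht.eq_or_lt with ht | ht
  · rw [cosBump_of_abs_le_one ht.ge]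
    rcases eq_or_eq_neg_of_abs_eq ht.symm with rfl | rfl <;> simp
  · exact Set.indicator_of_notMem (s := Set.Icc (-1) 1) (fun h => ht.not_ge (abs_le.2 h)) _

lemma cosBump_nonneg (t : ℝ) : 0 ≤ cosBump t :=
  Set.indicator_nonneg (fun t _ => by linarith [neg_one_le_cos (π * t)]) t

lemma cosBump_le_one (t : ℝ) : cosBump t ≤ 1 :=
  Set.indicator_apply_le' (fun _ => by linarith [cos_le_one (π * t)]) fun _ => zero_le_one

lemma cosBump_mul_abs_le_one (t : ℝ) : cosBump t * |t| ≤ 1 := by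
  rcases le_total 1 |t| with ht | ht
  · simp [cosBump_of_one_le_abs ht]
  · exact mul_le_one₀ (cosBump_le_one t) (abs_nonneg t) ht

lemma hasDerivAt_cosBump (t : ℝ) :
    HasDerivAt cosBump ((Set.Icc (-1) 1).indicator (fun t => -(π / 2) * sin (π * t)) t) t := by
  refine hasDerivAt_indicator isClosed_Icc (fun t _ => ?_) (fun t ht => ?_) t
  · have h := (((hasDerivAt_id t).const_mul π).cos.const_add 1).div_const 2
    exact h.congr_deriv (by simp; ring)
  · rw [frontier_Icc (by norm_num)] at ht
    rcases ht with rfl | rfl <;> simp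

lemma deriv_cosBump :
    deriv cosBump = (Set.Icc (-1) 1).indicator fun t => -(π / 2) * sin (π * t) :=
  funext fun t => (hasDerivAt_cosBump t).deriv

lemma contDiff_cosBump : ContDiff ℝ 1 cosBump := by
  refine contDiff_one_iff_deriv.2 ⟨fun t => (hasDerivAt_cosBump t).differentiableAt, ?_⟩
  rw [deriv_cosBump]
  refine continuous_indicator (fun t ht => ?_) (by fun_prop)
  rw [frontier_Icc (by norm_num)] at ht
  rcases ht with rfl | rfl <;> simp

lemma deriv_cosBump_of_one_le_abs {t : ℝ} (ht : 1 ≤ |t|) : deriv cosBump t = 0 := by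
  rw [deriv_cosBump]
  refine Set.indicator_apply_eq_zero.2 fun hmem => ?_
  rcases eq_or_eq_neg_of_abs_eq (le_antisymm (abs_le.2 hmem) ht) with rfl | rfl <;> simp

lemma abs_deriv_cosBump_le (t : ℝ) : |deriv cosBump t| ≤ π / 2 := by
  rw [deriv_cosBump, ← norm_eq_abs]
  refine (norm_indicator_le_norm_self _ t).trans ?_
  rw [norm_mul, norm_neg, norm_of_nonneg (by positivity), norm_eq_abs]
  exact mul_le_of_le_one_right (by positivity) (abs_sin_le_one _)

lemma cosBump_fract_add (y : ℝ) : cosBump (Int.fract y) + cosBump (Int.fract y - 1) = 1 := by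
  have h0 := Int.fract_nonneg y
  have h1 := (Int.fract_lt_one y).le
  rw [cosBump_of_abs_le_one (abs_le.2 ⟨by linarith, h1⟩),
    cosBump_of_abs_le_one (abs_le.2 ⟨by linarith, by linarith⟩), mul_sub, mul_one, cos_sub_pi]
  ring

lemma four_mul_cosBump_fract_mul (y : ℝ) :
    4 * (cosBump (Int.fract y) * cosBump (Int.fract y - 1)) = sin (π * y) ^ 2 := by
  have h0 := Int.fract_nonneg y
  have h1 := (Int.fract_lt_one y).le
  have hperiod : sin (π * Int.fract y) ^ 2 = sin (π * y) ^ 2 := by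
    rw [Int.fract, mul_sub, mul_comm π (⌊y⌋ : ℝ), sin_sub_int_mul_pi, mul_pow, ← sq_abs]
    simp
  rw [cosBump_of_abs_le_one (abs_le.2 ⟨by linarith, h1⟩),
    cosBump_of_abs_le_one (abs_le.2 ⟨by linarith, by linarith⟩), mul_sub, mul_one, cos_sub_pi,
    ← hperiod, sin_sq]
  ring

/-- The one-form of the magnetic potential `(Ω / 2) (-x₁, x₀)` of a rotation with speed `Ω`. -/
def symGauge (Ω : ℝ) (x : Pt) : Pt →L[ℝ] ℝ :=
  (Ω / 2) • (x 0 • EuclideanSpace.proj 1 - x 1 • EuclideanSpace.proj 0)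

lemma symGauge_apply (Ω : ℝ) (x e : Pt) :
    symGauge Ω x e = Ω / 2 * (x 0 * e 1 - x 1 * e 0) := by
  simp [symGauge]

/-- The phase of the `n`-th mode of the unit vortex lattice. It is the gauge transformation
carrying `symGauge (2 * π)` to the Landau gauge centred on the line `x₁ = n`. -/
def latticePhase (n : ℤ) (x : Pt) : ℝ := 2 * π * (x 0 * (x 1 / 2 - n))

/-- The `n`-th mode of the unit vortex lattice, concentrated on the strip `|x₁ - n| < 1`. -/
def latticeMode (n : ℤ) (x : Pt) : ℂ :=
  cosBump (x 1 - n) • Complex.exp (latticePhase n x * Complex.I)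

/-- A wave function with a lattice of vortices, one per unit cell, carrying the magnetic field
`2π`. It is a `C¹` compactly truncated version of a theta function. -/
def unitVortexLattice (x : Pt) : ℂ := ∑ᶠ n : ℤ, latticeMode n x

lemma latticeMode_of_one_le_abs {n : ℤ} {x : Pt} (h : 1 ≤ |x 1 - n|) : latticeMode n x = 0 := by
  rw [latticeMode, cosBump_of_one_le_abs h, zero_smul]

lemma contDiff_latticeMode (n : ℤ) : ContDiff ℝ 1 (latticeMode n) := by
  have hreal : ContDiff ℝ 1 (latticePhase n) := by unfold latticePhase; fun_prop
  have hphase : ContDiff ℝ 1 fun x => (latticePhase n x : ℂ) :=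
    Complex.ofRealCLM.contDiff.comp hreal
  have hbump : ContDiff ℝ 1 fun x : Pt => cosBump (x 1 - n) :=
    contDiff_cosBump.comp (by fun_prop)
  exact hbump.smul (hphase.mul contDiff_const).cexp

lemma locallyFinite_support_latticeMode :
    LocallyFinite fun n => Function.support (latticeMode n) := by
  intro x
  have hcont : Continuous fun y : Pt => y 1 := by fun_prop
  refine ⟨_, hcont.continuousAt.preimage_mem_nhds (Metric.ball_mem_nhds (x 1) one_pos), ?_⟩
  refine (Set.finite_Icc ⌊x 1 - 2⌋ ⌈x 1 + 2⌉).subset ?_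
  rintro n ⟨y, hy, hyx⟩
  have hlt : |y 1 - n| < 1 := not_le.1 fun h => hy (latticeMode_of_one_le_abs h)
  have hyx : |y 1 - x 1| < 1 := hyx
  rw [abs_lt] at hlt hyx
  have hlo : ⌊x 1 - 2⌋ < n + 1 := Int.floor_lt.2 (by push_cast; linarith)
  have hhi : n - 1 < ⌈x 1 + 2⌉ := Int.lt_ceil.2 (by push_cast; linarith)
  exact ⟨by omega, by omega⟩

lemma contDiff_unitVortexLattice : ContDiff ℝ 1 unitVortexLattice :=
  contMDiff_iff_contDiff.1 <| contMDiff_finsum (fun n => (contDiff_latticeMode n).contMDiff)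
    locallyFinite_support_latticeMode

lemma hasFDerivAt_latticePhase (n : ℤ) (x : Pt) :
    HasFDerivAt (latticePhase n) ((2 * π) • (x 0 • (2⁻¹ : ℝ) • (EuclideanSpace.proj 1 :
      Pt →L[ℝ] ℝ) + (x 1 / 2 - n) • EuclideanSpace.proj 0)) x := by
  have h (i : Fin 2) : HasFDerivAt (fun y : Pt => y i) (EuclideanSpace.proj i : Pt →L[ℝ] ℝ) x :=
    (EuclideanSpace.proj i : Pt →L[ℝ] ℝ).hasFDerivAt
  have h1 : HasFDerivAt (fun y : Pt => y 1 / 2 - n)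
      ((2⁻¹ : ℝ) • (EuclideanSpace.proj 1 : Pt →L[ℝ] ℝ)) x :=
    (((h 1).const_mul (2⁻¹ : ℝ)).sub_const (n : ℝ)).congr_of_eventuallyEq
      (Eventually.of_forall fun y => by ring)
  exact ((h 0).mul h1).const_mul (2 * π)

lemma covDeriv_latticeMode_apply (n : ℤ) (x e : Pt) :
    covDeriv (symGauge (2 * π)) (latticeMode n) x e =
      (deriv cosBump (x 1 - n) * e 1 + cosBump (x 1 - n) * (2 * π * (x 1 - n) * e 0) * Complex.I) *
        Complex.exp (latticePhase n x * Complex.I) := by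
  have hcoord : HasFDerivAt (fun y : Pt => y 1 - n) (EuclideanSpace.proj 1 : Pt →L[ℝ] ℝ) x :=
    (EuclideanSpace.proj 1 : Pt →L[ℝ] ℝ).hasFDerivAt.sub_const _
  have hbump := (contDiff_cosBump.differentiable one_ne_zero (x 1 - n)).hasDerivAt.comp_hasFDerivAt
    x hcoord
  refine (covDeriv_polar_apply hbump (hasFDerivAt_latticePhase n x) e).trans ?_
  simp only [symGauge_apply, smul_apply, add_apply, PiLp.proj_apply, smul_eq_mul,
    Function.comp_apply]
  push_cast
  ring

lemma covDeriv_latticeMode_of_one_le_abs {n : ℤ} {x : Pt} (h : 1 ≤ |x 1 - n|) :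
    covDeriv (symGauge (2 * π)) (latticeMode n) x = 0 := by
  ext e
  simp [covDeriv_latticeMode_apply, cosBump_of_one_le_abs h, deriv_cosBump_of_one_le_abs h]

lemma norm_covDeriv_latticeMode_le (n : ℤ) (x : Pt) :
    ‖covDeriv (symGauge (2 * π)) (latticeMode n) x‖ ≤ 5 * π / 2 := by
  refine ContinuousLinearMap.opNorm_le_bound _ (by positivity) fun e => ?_
  rw [covDeriv_latticeMode_apply, norm_mul, Complex.norm_exp_ofReal_mul_I, mul_one]
  have he (i : Fin 2) : |e i| ≤ ‖e‖ := PiLp.norm_apply_le e i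
  have hd : ‖(deriv cosBump (x 1 - n) * e 1 : ℂ)‖ ≤ π / 2 * ‖e‖ := by
    rw [← Complex.ofReal_mul, Complex.norm_real, norm_mul]
    exact mul_le_mul (abs_deriv_cosBump_le _) (he 1) (norm_nonneg _) (by positivity)
  have hb : ‖(cosBump (x 1 - n) * (2 * π * (x 1 - n) * e 0) * Complex.I : ℂ)‖ ≤
      2 * π * ‖e‖ := by
    rw [norm_mul, Complex.norm_I, mul_one]
    calc ‖(cosBump (x 1 - n) * (2 * π * (x 1 - n) * e 0) : ℂ)‖
        = 2 * π * (cosBump (x 1 - n) * |x 1 - n|) * |e 0| := by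
          have hcast : (cosBump (x 1 - n) * (2 * π * (x 1 - n) * e 0) : ℂ) =
              (cosBump (x 1 - n) * (2 * π * (x 1 - n) * e 0) : ℝ) := by push_cast; rfl
          rw [hcast, Complex.norm_real, norm_eq_abs, abs_mul, abs_mul, abs_mul,
            abs_of_nonneg (cosBump_nonneg _), abs_of_pos two_pi_pos]
          ring
      _ ≤ 2 * π * 1 * ‖e‖ := by
          gcongr
          exacts [cosBump_mul_abs_le_one _, he 0]
      _ = 2 * π * ‖e‖ := by ring
  refine (norm_add_le _ _).trans ((add_le_add hd hb).trans_eq ?_)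
  ring

lemma norm_covDeriv_unitVortexLattice_le (x : Pt) :
    ‖covDeriv (symGauge (2 * π)) unitVortexLattice x‖ ≤ 5 * π := by
  have hdiff (n : ℤ) : DifferentiableAt ℝ (latticeMode n) x :=
    (contDiff_latticeMode n).differentiable one_ne_zero x
  have hsum : covDeriv (symGauge (2 * π)) unitVortexLattice x = _ :=
    covDeriv_finsum hdiff locallyFinite_support_latticeMode
  rw [hsum, finsum_int_eq_add (y := x 1) fun n => covDeriv_latticeMode_of_one_le_abs]
  refine (norm_add_le _ _).trans ((add_le_add (norm_covDeriv_latticeMode_le _ x)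
    (norm_covDeriv_latticeMode_le _ x)).trans_eq ?_)
  ring

lemma norm_smul_exp_add_smul_exp_sq (a b α β : ℝ) :
    ‖a • Complex.exp (α * Complex.I) + b • Complex.exp (β * Complex.I)‖ ^ 2 =
      (a + b) ^ 2 - 4 * (a * b) * sin ((β - α) / 2) ^ 2 := by
  have hcos : cos β * cos α + sin β * sin α = 1 - 2 * sin ((β - α) / 2) ^ 2 := by
    rw [← cos_sub, sin_sq_eq_half_sub, mul_div_cancel₀ _ two_ne_zero]
    ring
  rw [← Complex.normSq_eq_norm_sq, Complex.normSq_apply]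
  simp only [Complex.add_re, Complex.add_im, Complex.smul_re, Complex.smul_im,
    Complex.exp_ofReal_mul_I_re, Complex.exp_ofReal_mul_I_im, smul_eq_mul]
  linear_combination 2 * a * b * hcos + a ^ 2 * sin_sq_add_cos_sq α + b ^ 2 * sin_sq_add_cos_sq β

lemma norm_unitVortexLattice_sq (x : Pt) :
    ‖unitVortexLattice x‖ ^ 2 = 1 - sin (π * x 0) ^ 2 * sin (π * x 1) ^ 2 := by
  rw [unitVortexLattice, finsum_int_eq_add (y := x 1) fun n => latticeMode_of_one_le_abs,
    latticeMode, latticeMode, norm_smul_exp_add_smul_exp_sq]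
  have hphase : (latticePhase (⌊x 1⌋ + 1) x - latticePhase ⌊x 1⌋ x) / 2 = -(π * x 0) := by
    unfold latticePhase
    push_cast
    ring
  have hfract : x 1 - (⌊x 1⌋ + 1 : ℤ) = Int.fract (x 1) - 1 := by
    rw [Int.fract]
    push_cast
    ring
  rw [hphase, hfract, Int.self_sub_floor, cosBump_fract_add, four_mul_cosBump_fract_mul, sin_neg]
  ring

/-- The unit vortex lattice rescaled to the magnetic field `Ω`. -/
def vortexLattice (Ω : ℝ) (x : Pt) : ℂ := unitVortexLattice (√(Ω / (2 * π)) • x)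

lemma contDiff_vortexLattice (Ω : ℝ) : ContDiff ℝ 1 (vortexLattice Ω) :=
  contDiff_unitVortexLattice.comp (contDiff_const_smul _)

lemma norm_vortexLattice_sq (Ω : ℝ) (x : Pt) :
    ‖vortexLattice Ω x‖ ^ 2 =
      1 - sin (π * (√(Ω / (2 * π)) * x 0)) ^ 2 * sin (π * (√(Ω / (2 * π)) * x 1)) ^ 2 := by
  rw [vortexLattice, norm_unitVortexLattice_sq, PiLp.smul_apply, PiLp.smul_apply, smul_eq_mul,
    smul_eq_mul]

lemma norm_covDeriv_vortexLattice_sq_le {Ω : ℝ} (hΩ : 0 ≤ Ω) (x : Pt) :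
    ‖covDeriv (symGauge Ω) (vortexLattice Ω) x‖ ^ 2 ≤ 25 * π / 2 * Ω := by
  set κ : ℝ := √(Ω / (2 * π))
  have hκsq : κ ^ 2 = Ω / (2 * π) := sq_sqrt (by positivity)
  have hgauge : symGauge Ω x = κ • symGauge (2 * π) (κ • x) := by
    ext e
    have hΩκ : Ω = 2 * π * κ ^ 2 := by rw [hκsq]; field_simp
    simp only [symGauge_apply, smul_apply, PiLp.smul_apply, smul_eq_mul, hΩκ]
    ring
  have hscale : covDeriv (symGauge Ω) (vortexLattice Ω) x = _ := covDeriv_comp_smul hgauge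
  rw [hscale, norm_smul, mul_pow, norm_eq_abs, sq_abs, hκsq]
  calc Ω / (2 * π) * ‖covDeriv (symGauge (2 * π)) unitVortexLattice (κ • x)‖ ^ 2
      ≤ Ω / (2 * π) * (5 * π) ^ 2 := by gcongr; exact norm_covDeriv_unitVortexLattice_le _
    _ = 25 * π / 2 * Ω := by field_simp; ring

/-! ### Averages over the vortex lattice -/

lemma integral_comp_mul_le_of_periodic {f : ℝ → ℝ} (hf : Continuous f) (h0 : ∀ t, 0 ≤ f t)
    (hper : Function.Periodic f 1) {κ : ℝ} (hκ : 1 ≤ κ) :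
    ∫ x in (-1)..1, f (κ * x) ≤ 3 * ∫ x in 0..1, f x := by
  have hκ0 : 0 < κ := by linarith
  have hint (a b : ℝ) : IntervalIntegrable f volume a b := hf.intervalIntegrable a b
  have hperiods : ∫ x in (-κ)..(-κ + ⌈2 * κ⌉), f x = ⌈2 * κ⌉ * ∫ x in 0..1, f x := by
    have h := hper.intervalIntegral_add_zsmul_eq ⌈2 * κ⌉ (-κ) hint
    rwa [hper.intervalIntegral_add_eq (-κ) 0, zero_add, zsmul_one, zsmul_eq_mul] at h
  have hceil : (⌈2 * κ⌉ : ℝ) ≤ 3 * κ := by linarith [Int.ceil_lt_add_one (2 * κ)]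
  calc ∫ x in (-1)..1, f (κ * x)
      = κ⁻¹ * ∫ x in (-κ)..κ, f x := by
        rw [intervalIntegral.integral_comp_mul_left f hκ0.ne', smul_eq_mul, mul_neg, mul_one]
    _ ≤ κ⁻¹ * ∫ x in (-κ)..(-κ + ⌈2 * κ⌉), f x := by
        gcongr
        exact intervalIntegral.integral_mono_interval le_rfl (by linarith)
          (by linarith [Int.le_ceil (2 * κ)]) (ae_of_all _ h0) (hint _ _)
    _ ≤ κ⁻¹ * (3 * κ * ∫ x in 0..1, f x) := by
        rw [hperiods]
        gcongr
        exact intervalIntegral.integral_nonneg zero_le_one fun x _ => h0 x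
    _ = 3 * ∫ x in 0..1, f x := by field_simp

section AntitoneAverages

variable {φ : ℝ → ℝ}

lemma continuous_comp_abs_cos (hφ : ContinuousOn φ (Set.Icc 0 1)) :
    Continuous fun x => φ |cos (π * x)| :=
  hφ.comp_continuous (by fun_prop) fun _ => ⟨abs_nonneg _, abs_cos_le_one _⟩

lemma integral_half_comp_abs_cos_le (hφ : ContinuousOn φ (Set.Icc 0 1))
    (hanti : AntitoneOn φ (Set.Icc 0 1)) :
    ∫ x in 0..1 / 2, φ |cos (π * x)| ≤ 1 / 2 * ∫ x in 0..1, φ x := by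
  have hlin : ContinuousOn (fun x : ℝ => φ (1 - 2 * x)) (Set.uIcc 0 (1 / 2)) := by
    refine hφ.comp (by fun_prop) fun x hx => ?_
    rw [Set.uIcc_of_le (by norm_num)] at hx
    exact ⟨by linarith [hx.2], by linarith [hx.1]⟩
  calc ∫ x in 0..1 / 2, φ |cos (π * x)|
      ≤ ∫ x in 0..1 / 2, φ (1 - 2 * x) := by
        refine intervalIntegral.integral_mono_on (by norm_num)
          ((continuous_comp_abs_cos hφ).intervalIntegrable _ _) hlin.intervalIntegrable ?_
        intro x hx
        have hcos : 1 - 2 * x ≤ cos (π * x) := by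
          have h := one_sub_mul_le_cos (x := π * x) (by nlinarith [pi_pos, hx.1])
            (by nlinarith [pi_pos, hx.2])
          rwa [← mul_assoc, div_mul_cancel₀ _ pi_ne_zero] at h
        exact hanti ⟨by linarith [hx.2], by linarith [hx.1]⟩ ⟨abs_nonneg _, abs_cos_le_one _⟩
          (hcos.trans (le_abs_self _))
    _ = 1 / 2 * ∫ x in 0..1, φ x := by
        rw [intervalIntegral.integral_comp_sub_mul _ two_ne_zero]
        norm_num

lemma integral_comp_abs_cos_le (hφ : ContinuousOn φ (Set.Icc 0 1))
    (hanti : AntitoneOn φ (Set.Icc 0 1)) :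
    ∫ x in 0..1, φ |cos (π * x)| ≤ ∫ x in 0..1, φ x := by
  have hint (a b : ℝ) : IntervalIntegrable (fun x => φ |cos (π * x)|) volume a b :=
    (continuous_comp_abs_cos hφ).intervalIntegrable a b
  have hsymm : ∫ x in 1 / 2..1, φ |cos (π * x)| = ∫ x in 0..1 / 2, φ |cos (π * x)| := by
    have h := intervalIntegral.integral_comp_sub_left (a := 0) (b := 1 / 2)
      (fun x => φ |cos (π * x)|) 1
    simp only [mul_sub, mul_one, cos_pi_sub, abs_neg] at h
    rw [h]
    norm_num
  rw [← intervalIntegral.integral_add_adjacent_intervals (hint 0 (1 / 2)) (hint _ 1), hsymm]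
  linarith [integral_half_comp_abs_cos_le hφ hanti]

lemma integral_comp_abs_cos_mul_le (hφ : ContinuousOn φ (Set.Icc 0 1))
    (hanti : AntitoneOn φ (Set.Icc 0 1)) (h0 : ∀ u ∈ Set.Icc 0 1, 0 ≤ φ u) {κ : ℝ}
    (hκ : 1 ≤ κ) :
    ∫ x in (-1)..1, φ |cos (π * (κ * x))| ≤ 3 * ∫ x in 0..1, φ x := by
  have hper : Function.Periodic (fun x => φ |cos (π * x)|) 1 := fun x => by
    simp only [mul_add, mul_one, cos_add_pi, abs_neg]
  refine (integral_comp_mul_le_of_periodic (continuous_comp_abs_cos hφ)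
    (fun x => h0 _ ⟨abs_nonneg _, abs_cos_le_one _⟩) hper hκ).trans ?_
  gcongr
  exact integral_comp_abs_cos_le hφ hanti

end AntitoneAverages

lemma integral_inv_add_sq_le {k : ℝ} (hk : 0 < k) : ∫ u in 0..1, ((u + k) ^ 2)⁻¹ ≤ k⁻¹ := by
  have h : ∫ u in 0..1, ((u + k) ^ 2)⁻¹ = k⁻¹ - (1 + k)⁻¹ := by
    rw [intervalIntegral.integral_comp_add_right fun u => (u ^ 2)⁻¹]
    have hz := integral_zpow (a := 0 + k) (b := 1 + k) (n := -2)
      (Or.inr ⟨by norm_num, Set.notMem_uIcc_of_lt (by linarith) (by linarith)⟩)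
    norm_num [zpow_neg] at hz
    simpa [add_comm, sub_eq_add_neg, div_neg, neg_add] using hz
  rw [h]
  have : 0 ≤ (1 + k)⁻¹ := by positivity
  linarith

lemma integral_inv_add_eq_log {s : ℝ} (hs : 0 < s) :
    ∫ u in 0..1, (u + s)⁻¹ = log ((1 + s) / s) := by
  rw [intervalIntegral.integral_comp_add_right fun u => u⁻¹, zero_add,
    integral_inv_of_pos hs (by linarith)]

lemma log_one_add_sqrt_div_sqrt_le {ε : ℝ} (hε : 0 < ε) (h4 : ε ≤ 1 / 4) :
    log ((1 + √ε) / √ε) ≤ |log ε| := by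
  have hs : 0 < √ε := sqrt_pos.2 hε
  have hs2 : √ε ≤ 1 / 2 := by
    rw [sqrt_le_left (by norm_num)]
    linarith
  have hsq : √ε * √ε = ε := mul_self_sqrt hε.le
  rw [abs_of_nonpos (log_nonpos hε.le (by linarith)), ← log_inv]
  refine log_le_log (by positivity) ?_
  have hle : (1 + √ε) * √ε ≤ 1 := by nlinarith
  rw [div_le_iff₀ hs, inv_mul_eq_div, le_div_iff₀ hε]
  calc (1 + √ε) * ε = (1 + √ε) * √ε * √ε := by rw [mul_assoc, hsq]
    _ ≤ 1 * √ε := by gcongr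
    _ = √ε := one_mul _

lemma inv_one_sub_sin_sq_mul_sin_sq_add_le {ε : ℝ} (hε : 0 < ε) (a b : ℝ) :
    (1 - sin a ^ 2 * sin b ^ 2 + ε)⁻¹ ≤ 6 * ((|cos b| + (|cos a| + √ε)) ^ 2)⁻¹ := by
  have hmean : (|cos b| + (|cos a| + √ε)) ^ 2 ≤ 3 * (cos a ^ 2 + cos b ^ 2 + ε) := by
    nlinarith [sq_nonneg (|cos b| - |cos a|), sq_nonneg (|cos a| - √ε),
      sq_nonneg (|cos b| - √ε), sq_abs (cos a), sq_abs (cos b), sq_sqrt hε.le]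
  have hcos : cos a ^ 2 + cos b ^ 2 ≤ 2 * (1 - sin a ^ 2 * sin b ^ 2) := by
    rw [cos_sq', cos_sq']
    nlinarith [mul_nonneg (sq_nonneg (sin a)) (sub_nonneg.2 (sin_sq_le_one b)),
      mul_nonneg (sq_nonneg (sin b)) (sub_nonneg.2 (sin_sq_le_one a))]
  have hpos : 0 < (|cos b| + (|cos a| + √ε)) ^ 2 := by positivity
  rw [← div_eq_mul_inv, ← one_div, div_le_div_iff₀ (by linarith) hpos]
  linarith

lemma one_sub_sin_sq_mul_sin_sq_nonneg (a b : ℝ) : 0 ≤ 1 - sin a ^ 2 * sin b ^ 2 :=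
  sub_nonneg.2 (mul_le_one₀ (sin_sq_le_one a) (sq_nonneg _) (sin_sq_le_one b))

lemma integral_inv_lattice_add_le {ε : ℝ} (hε : 0 < ε) {κ : ℝ} (hκ : 1 ≤ κ) (a : ℝ) :
    ∫ y in (-1)..1, (1 - sin a ^ 2 * sin (π * (κ * y)) ^ 2 + ε)⁻¹ ≤
      18 * (|cos a| + √ε)⁻¹ := by
  set k : ℝ := |cos a| + √ε
  have hk : 0 < k := by positivity
  have hbase (u : ℝ) (hu : u ∈ Set.Icc 0 1) : 0 < u + k := add_pos_of_nonneg_of_pos hu.1 hk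
  have hφ : ContinuousOn (fun u => 6 * ((u + k) ^ 2)⁻¹) (Set.Icc 0 1) :=
    .mul continuousOn_const (.inv₀ (by fun_prop) fun u hu => (pow_pos (hbase u hu) 2).ne')
  have hanti : AntitoneOn (fun u => 6 * ((u + k) ^ 2)⁻¹) (Set.Icc 0 1) := fun u hu v _ huv => by
    have := hbase u hu
    simp only
    gcongr
  have hcont : Continuous fun y => (1 - sin a ^ 2 * sin (π * (κ * y)) ^ 2 + ε)⁻¹ :=
    .inv₀ (by fun_prop) fun y => by linarith [one_sub_sin_sq_mul_sin_sq_nonneg a (π * (κ * y))]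
  have hφcont : Continuous fun y => 6 * ((|cos (π * (κ * y))| + k) ^ 2)⁻¹ :=
    (continuous_comp_abs_cos hφ).comp (continuous_const_mul κ)
  calc ∫ y in (-1)..1, (1 - sin a ^ 2 * sin (π * (κ * y)) ^ 2 + ε)⁻¹
      ≤ ∫ y in (-1)..1, 6 * ((|cos (π * (κ * y))| + k) ^ 2)⁻¹ :=
        intervalIntegral.integral_mono_on (by norm_num) (hcont.intervalIntegrable _ _)
          (hφcont.intervalIntegrable _ _) fun y _ => inv_one_sub_sin_sq_mul_sin_sq_add_le hε _ _
    _ ≤ 3 * ∫ u in 0..1, 6 * ((u + k) ^ 2)⁻¹ :=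
        integral_comp_abs_cos_mul_le hφ hanti (fun u _ => by positivity) hκ
    _ ≤ 18 * k⁻¹ := by
        rw [intervalIntegral.integral_const_mul]
        linarith [integral_inv_add_sq_le hk]

lemma continuous_inv_lattice_add {ε : ℝ} (hε : 0 < ε) (κ : ℝ) :
    Continuous (Function.uncurry fun x y : ℝ =>
      (1 - sin (π * (κ * x)) ^ 2 * sin (π * (κ * y)) ^ 2 + ε)⁻¹) := by
  refine .inv₀ (by fun_prop) fun p => ?_
  have := one_sub_sin_sq_mul_sin_sq_nonneg (π * (κ * p.1)) (π * (κ * p.2))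
  positivity

lemma integral_integral_inv_lattice_add_le {ε : ℝ} (hε : 0 < ε) (h4 : ε ≤ 1 / 4) {κ : ℝ}
    (hκ : 1 ≤ κ) :
    ∫ x in (-1)..1, ∫ y in (-1)..1,
      (1 - sin (π * (κ * x)) ^ 2 * sin (π * (κ * y)) ^ 2 + ε)⁻¹ ≤ 54 * |log ε| := by
  have hs : 0 < √ε := sqrt_pos.2 hε
  have hbase (u : ℝ) (hu : u ∈ Set.Icc 0 1) : 0 < u + √ε := add_pos_of_nonneg_of_pos hu.1 hs
  have hφ : ContinuousOn (fun u => 18 * (u + √ε)⁻¹) (Set.Icc 0 1) :=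
    .mul continuousOn_const (.inv₀ (by fun_prop) fun u hu => (hbase u hu).ne')
  have hanti : AntitoneOn (fun u => 18 * (u + √ε)⁻¹) (Set.Icc 0 1) := fun u hu v _ huv => by
    have := hbase u hu
    simp only
    gcongr
  have h0 (u : ℝ) (hu : u ∈ Set.Icc 0 1) : 0 ≤ 18 * (u + √ε)⁻¹ := by
    have := hbase u hu
    positivity
  have hinner : Continuous fun x => ∫ y in (-1)..1,
      (1 - sin (π * (κ * x)) ^ 2 * sin (π * (κ * y)) ^ 2 + ε)⁻¹ :=
    intervalIntegral.continuous_parametric_intervalIntegral_of_continuous'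
      (continuous_inv_lattice_add hε κ) _ _
  have hφcont : Continuous fun x => 18 * (|cos (π * (κ * x))| + √ε)⁻¹ :=
    (continuous_comp_abs_cos hφ).comp (continuous_const_mul κ)
  calc ∫ x in (-1)..1, ∫ y in (-1)..1,
        (1 - sin (π * (κ * x)) ^ 2 * sin (π * (κ * y)) ^ 2 + ε)⁻¹
      ≤ ∫ x in (-1)..1, 18 * (|cos (π * (κ * x))| + √ε)⁻¹ :=
        intervalIntegral.integral_mono_on (by norm_num) (hinner.intervalIntegrable _ _)
          (hφcont.intervalIntegrable _ _) fun x _ => integral_inv_lattice_add_le hε hκ _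
    _ ≤ 3 * ∫ u in 0..1, 18 * (u + √ε)⁻¹ := integral_comp_abs_cos_mul_le hφ hanti h0 hκ
    _ = 54 * log ((1 + √ε) / √ε) := by
        rw [intervalIntegral.integral_const_mul, integral_inv_add_eq_log hs]
        ring
    _ ≤ 54 * |log ε| := by
        gcongr
        exact log_one_add_sqrt_div_sqrt_le hε h4

/-! ### Integration over the unit disc -/

lemma measurableSet_B1 : MeasurableSet B1 := measurableSet_ball

lemma volume_B1 : volume B1 = ENNReal.ofReal π := by
  simp [B1, EuclideanSpace.volume_ball_fin_two]

instance : IsFiniteMeasure (volume.restrict B1) := ⟨by simp [volume_B1]⟩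

lemma norm_sq_lt_one_of_mem_B1 {x : Pt} (hx : x ∈ B1) : ‖x‖ ^ 2 < 1 := by
  rw [sq_lt_one_iff₀ (norm_nonneg x)]
  exact mem_ball_zero_iff.1 hx

lemma setIntegral_B1_const (c : ℝ) : ∫ _ in B1, c = π * c := by
  rw [setIntegral_const, measureReal_def, volume_B1, ENNReal.toReal_ofReal pi_pos.le, smul_eq_mul]

lemma B1_ae_eq_closedBall : B1 =ᵐ[volume] Metric.closedBall (0 : Pt) 1 := by
  refine Metric.ball_subset_closedBall.eventuallyLE.antisymm (ae_le_set.2 ?_)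
  rw [Metric.closedBall_sdiff_ball]
  exact Measure.addHaar_sphere_of_ne_zero _ _ one_ne_zero

lemma integrableOn_B1_of_continuous {f : Pt → ℝ} (hf : Continuous f) : IntegrableOn f B1 :=
  (hf.continuousOn.integrableOn_compact (isCompact_closedBall 0 1)).mono_set
    Metric.ball_subset_closedBall

lemma setIntegral_B1_le_integral_integral {F : ℝ → ℝ → ℝ} (hF : Continuous (Function.uncurry F))
    (h0 : ∀ a b, 0 ≤ F a b) :
    ∫ x in B1, F (x 0) (x 1) ≤ ∫ a in (-1)..1, ∫ b in (-1)..1, F a b := by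
  set S : Set (ℝ × ℝ) := Set.Ioc (-1) 1 ×ˢ Set.Ioc (-1) 1
  have hS : MeasurableSet S := measurableSet_Ioc.prod measurableSet_Ioc
  have hpres : MeasurePreserving fun x : Pt => (x 0, x 1) :=
    (volume_preserving_finTwoArrow ℝ).comp (PiLp.volume_preserving_ofLp (Fin 2))
  have hpresS := hpres.restrict_preimage hS
  have hint : IntegrableOn (Function.uncurry F) S :=
    (hF.continuousOn.integrableOn_compact (isCompact_Icc.prod isCompact_Icc)).mono_set
      (Set.prod_mono Set.Ioc_subset_Icc_self Set.Ioc_subset_Icc_self)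
  have hsub : B1 ⊆ (fun x : Pt => (x 0, x 1)) ⁻¹' S := fun x hx => by
    have hcoord (i : Fin 2) : |x i| < 1 :=
      (PiLp.norm_apply_le x i).trans_lt (mem_ball_zero_iff.1 hx)
    have hmem (i : Fin 2) : x i ∈ Set.Ioc (-1) 1 :=
      ⟨(abs_lt.1 (hcoord i)).1, (abs_lt.1 (hcoord i)).2.le⟩
    exact ⟨hmem 0, hmem 1⟩
  calc ∫ x in B1, F (x 0) (x 1)
      ≤ ∫ x in (fun x : Pt => (x 0, x 1)) ⁻¹' S, Function.uncurry F (x 0, x 1) :=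
        setIntegral_mono_set (hpresS.integrable_comp_of_integrable hint)
          (ae_of_all _ fun x => h0 _ _) hsub.eventuallyLE
    _ = ∫ p in S, Function.uncurry F p := by
        rw [← hpresS.map_eq, integral_map hpresS.measurable.aemeasurable
          hF.aestronglyMeasurable]
    _ = ∫ a in (-1)..1, ∫ b in (-1)..1, F a b := by
        simp only [intervalIntegral.integral_of_le (show (-1 : ℝ) ≤ 1 by norm_num)]
        exact setIntegral_prod _ hint

lemma continuous_inv_norm_vortexLattice_sq_add {ε : ℝ} (hε : 0 < ε) (Ω : ℝ) :
    Continuous fun x => (‖vortexLattice Ω x‖ ^ 2 + ε)⁻¹ := by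
  have hv := (contDiff_vortexLattice Ω).continuous
  exact .inv₀ (by fun_prop) fun x => by positivity

lemma setIntegral_inv_norm_vortexLattice_sq_add_le {ε Ω : ℝ} (hε : 0 < ε) (h4 : ε ≤ 1 / 4)
    (hΩ : 2 * π ≤ Ω) : ∫ x in B1, (‖vortexLattice Ω x‖ ^ 2 + ε)⁻¹ ≤ 54 * |log ε| := by
  have hκ : 1 ≤ √(Ω / (2 * π)) := one_le_sqrt.2 ((one_le_div two_pi_pos).2 hΩ)
  simp only [norm_vortexLattice_sq]
  refine (setIntegral_B1_le_integral_integral (continuous_inv_lattice_add hε _)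
    fun a b => ?_).trans (integral_integral_inv_lattice_add_le hε h4 hκ)
  exact inv_nonneg.2 (add_nonneg (one_sub_sin_sq_mul_sin_sq_nonneg _ _) hε.le)

/-! ### The Gross-Pitaevskii and Thomas-Fermi functionals -/

section Functionals

variable {ε Ω Ω₀ l : ℝ} {Ψ : Pt → ℂ} {ρ : Pt → ℝ}

/- Completing the square: the rotation term is absorbed into the covariant derivative at the
expense of the centrifugal potential. -/
lemma gpDensity_eq (ε Ω : ℝ) (Ψ : Pt → ℂ) (x : Pt) :
    gpDensity ε Ω Ψ x = ‖covDeriv (symGauge Ω) Ψ x (EuclideanSpace.single 0 1)‖ ^ 2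
      + ‖covDeriv (symGauge Ω) Ψ x (EuclideanSpace.single 1 1)‖ ^ 2
      - Ω ^ 2 * ‖x‖ ^ 2 / 4 * ‖Ψ x‖ ^ 2 + ‖Ψ x‖ ^ 4 / ε ^ 2 := by
  have h0 : covDeriv (symGauge Ω) Ψ x (EuclideanSpace.single 0 1) =
      pd1 Ψ x + Complex.I * ((Ω * x 1 / 2 : ℝ) : ℂ) * Ψ x := by
    rw [covDeriv_apply, symGauge_apply, pd1]
    simp only [PiLp.single_eq_same, ne_eq, one_ne_zero, not_false_eq_true, PiLp.single_eq_of_ne]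
    push_cast
    ring
  have h1 : covDeriv (symGauge Ω) Ψ x (EuclideanSpace.single 1 1) =
      pd2 Ψ x - Complex.I * ((Ω * x 0 / 2 : ℝ) : ℂ) * Ψ x := by
    rw [covDeriv_apply, symGauge_apply, pd2]
    simp only [PiLp.single_eq_same, ne_eq, zero_ne_one, not_false_eq_true, PiLp.single_eq_of_ne]
    push_cast
    ring
  rw [h0, h1, gpDensity, angMom, EuclideanSpace.real_norm_sq_eq x, Fin.sum_univ_two]
  simp only [← Complex.normSq_eq_norm_sq, Complex.normSq_apply]
  simp only [Complex.add_re, Complex.add_im, Complex.sub_re, Complex.sub_im, Complex.neg_re,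
    Complex.neg_im, Complex.mul_re, Complex.mul_im, Complex.conj_re, Complex.conj_im,
    Complex.I_re, Complex.I_im, Complex.ofReal_re, Complex.ofReal_im]
  ring

lemma le_gpDensity (ε Ω : ℝ) (Ψ : Pt → ℂ) (x : Pt) :
    ‖Ψ x‖ ^ 4 / ε ^ 2 - Ω ^ 2 * ‖x‖ ^ 2 / 4 * ‖Ψ x‖ ^ 2 ≤ gpDensity ε Ω Ψ x := by
  rw [gpDensity_eq]
  nlinarith [sq_nonneg ‖covDeriv (symGauge Ω) Ψ x (EuclideanSpace.single 0 1)‖,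
    sq_nonneg ‖covDeriv (symGauge Ω) Ψ x (EuclideanSpace.single 1 1)‖]

lemma gpDensity_le (ε Ω : ℝ) (Ψ : Pt → ℂ) (x : Pt) :
    gpDensity ε Ω Ψ x ≤ 2 * ‖covDeriv (symGauge Ω) Ψ x‖ ^ 2
      - Ω ^ 2 * ‖x‖ ^ 2 / 4 * ‖Ψ x‖ ^ 2 + ‖Ψ x‖ ^ 4 / ε ^ 2 := by
  have hle (i : Fin 2) : ‖covDeriv (symGauge Ω) Ψ x (EuclideanSpace.single i 1)‖ ^ 2 ≤
      ‖covDeriv (symGauge Ω) Ψ x‖ ^ 2 := by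
    gcongr
    exact (covDeriv (symGauge Ω) Ψ x).unit_le_opNorm _ (by simp)
  rw [gpDensity_eq]
  linarith [hle 0, hle 1]

lemma sq_mul_gpDensity_le (hε : 0 < ε) (Ω₀ : ℝ) (Ψ : Pt → ℂ) (x : Pt) :
    ε ^ 2 * gpDensity ε (Ω₀ / ε) Ψ x ≤ 2 * ε ^ 2 * ‖covDeriv (symGauge (Ω₀ / ε)) Ψ x‖ ^ 2
      + (‖Ψ x‖ ^ 4 - Ω₀ ^ 2 * ‖x‖ ^ 2 / 4 * ‖Ψ x‖ ^ 2) := by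
  refine (mul_le_mul_of_nonneg_left (gpDensity_le _ _ _ _) (sq_nonneg ε)).trans_eq ?_
  field_simp
  ring

lemma gpAdm_of_contDiff (h : ContDiff ℝ 1 Ψ) (hmass : ∫ x in B1, ‖Ψ x‖ ^ 2 = 1) :
    gpAdm Ψ := by
  have hc := h.continuous
  have hf := h.continuous_fderiv one_ne_zero
  have hpd1 : Continuous (pd1 Ψ) := hf.clm_apply continuous_const
  have hpd2 : Continuous (pd2 Ψ) := hf.clm_apply continuous_const
  refine ⟨(h.differentiable one_ne_zero).differentiableOn,
    integrableOn_B1_of_continuous (by fun_prop), integrableOn_B1_of_continuous (by fun_prop),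
    integrableOn_B1_of_continuous (by fun_prop), integrableOn_B1_of_continuous ?_, hmass⟩
  unfold angMom
  exact Complex.continuous_re.comp ((Complex.continuous_conj.comp hc).mul (by fun_prop))

lemma exists_gpAdm : ∃ Ψ, gpAdm Ψ := by
  refine ⟨fun _ => ((√π)⁻¹ : ℝ), gpAdm_of_contDiff contDiff_const ?_⟩
  rw [setIntegral_B1_const, Complex.norm_real, norm_eq_abs, sq_abs, inv_pow, sq_sqrt pi_pos.le,
    mul_inv_cancel₀ pi_ne_zero]

lemma tfAdm_norm_sq (h : gpAdm Ψ) : tfAdm fun x => ‖Ψ x‖ ^ 2 := by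
  obtain ⟨-, hsq, -, hfour, -, hmass⟩ := h
  refine ⟨hsq, hfour.congr (ae_of_all _ fun x => ?_), ae_of_all _ fun x => by positivity, hmass⟩
  simp only
  ring

lemma integrableOn_gpDensity (h : gpAdm Ψ) (ε Ω : ℝ) : IntegrableOn (gpDensity ε Ω Ψ) B1 := by
  obtain ⟨-, -, hgrad, hfour, hang, -⟩ := h
  exact (hgrad.sub (hang.const_mul Ω)).add (hfour.div_const _)

lemma integrableOn_tfEnergy_integrand (h : tfAdm ρ) (Ω₀ : ℝ) :
    IntegrableOn (fun x => ρ x ^ 2 - Ω₀ ^ 2 * ‖x‖ ^ 2 * ρ x / 4) B1 := by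
  have hpot : IntegrableOn (fun x => Ω₀ ^ 2 * ‖x‖ ^ 2 / 4 * ρ x) B1 := by
    refine Integrable.bdd_mul (c := Ω₀ ^ 2 / 4) h.1 (by fun_prop) ?_
    filter_upwards [ae_restrict_mem measurableSet_B1] with x hx
    rw [norm_of_nonneg (by positivity)]
    gcongr
    exact mul_le_of_le_one_right (sq_nonneg Ω₀) (norm_sq_lt_one_of_mem_B1 hx).le
  refine h.2.1.sub (hpot.congr (ae_of_all _ fun x => ?_))
  ring

/-- The formal solution of the Euler-Lagrange equation of the Thomas-Fermi functional with
chemical potential `l`; the Thomas-Fermi minimizer is its positive part. -/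
def tfProfile (Ω₀ l : ℝ) (x : Pt) : ℝ := (l + Ω₀ ^ 2 * ‖x‖ ^ 2 / 4) / 2

lemma contDiff_tfProfile {n : WithTop ℕ∞} : ContDiff ℝ n (tfProfile Ω₀ l) := by
  have h := contDiff_norm_sq ℝ (E := Pt) (n := n)
  unfold tfProfile
  fun_prop

lemma integral_neg_sq_add_le_tfEnergy (h : tfAdm ρ) (Ω₀ l : ℝ) :
    (∫ x in B1, -max (tfProfile Ω₀ l x) 0 ^ 2) + l ≤ tfEnergy Ω₀ ρ := by
  have hT : Continuous (tfProfile Ω₀ l) := (contDiff_tfProfile (n := 0)).continuous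
  have hint : IntegrableOn (fun x => -max (tfProfile Ω₀ l x) 0 ^ 2) B1 :=
    integrableOn_B1_of_continuous (by fun_prop)
  have hmass : ∫ x in B1, l * ρ x = l := by rw [integral_const_mul, h.2.2.2, mul_one]
  nth_rewrite 2 [← hmass]
  rw [← integral_add hint (h.1.const_mul l), tfEnergy]
  refine integral_mono_ae (hint.add (h.1.const_mul l)) (integrableOn_tfEnergy_integrand h Ω₀) ?_
  filter_upwards [h.2.2.1] with x hx
  have hprofile : Ω₀ ^ 2 * ‖x‖ ^ 2 * ρ x / 4 = (2 * tfProfile Ω₀ l x - l) * ρ x := by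
    unfold tfProfile
    ring
  rw [hprofile]
  nlinarith [sq_nonneg (ρ x - max (tfProfile Ω₀ l x) 0),
    mul_le_mul_of_nonneg_right (le_max_left (tfProfile Ω₀ l x) 0) hx]

lemma integral_neg_sq_add_le_tfGround (Ω₀ l : ℝ) :
    (∫ x in B1, -max (tfProfile Ω₀ l x) 0 ^ 2) + l ≤ tfGround Ω₀ := by
  obtain ⟨Ψ, hΨ⟩ := exists_gpAdm
  refine le_csInf ⟨_, _, tfAdm_norm_sq hΨ, rfl⟩ ?_
  rintro _ ⟨ρ, hρ, rfl⟩
  exact integral_neg_sq_add_le_tfEnergy hρ Ω₀ l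

lemma tfGround_le_tfEnergy (h : tfAdm ρ) (Ω₀ : ℝ) : tfGround Ω₀ ≤ tfEnergy Ω₀ ρ := by
  refine csInf_le ⟨(∫ x in B1, -max (tfProfile Ω₀ 0 x) 0 ^ 2) + 0, ?_⟩ ⟨ρ, h, rfl⟩
  rintro _ ⟨ρ', hρ', rfl⟩
  exact integral_neg_sq_add_le_tfEnergy hρ' Ω₀ 0

lemma tfGround_le_sq_mul_gpEnergy (hε : 0 < ε) (h : gpAdm Ψ) (Ω₀ : ℝ) :
    tfGround Ω₀ ≤ ε ^ 2 * gpEnergy ε (Ω₀ / ε) Ψ := by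
  refine (tfGround_le_tfEnergy (tfAdm_norm_sq h) Ω₀).trans ?_
  rw [tfEnergy, gpEnergy, ← integral_const_mul]
  refine integral_mono (integrableOn_tfEnergy_integrand (tfAdm_norm_sq h) Ω₀)
    ((integrableOn_gpDensity h _ _).const_mul _) fun x => ?_
  calc (‖Ψ x‖ ^ 2) ^ 2 - Ω₀ ^ 2 * ‖x‖ ^ 2 * ‖Ψ x‖ ^ 2 / 4
      = ε ^ 2 * (‖Ψ x‖ ^ 4 / ε ^ 2 - (Ω₀ / ε) ^ 2 * ‖x‖ ^ 2 / 4 * ‖Ψ x‖ ^ 2) := by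
        field_simp
    _ ≤ ε ^ 2 * gpDensity ε (Ω₀ / ε) Ψ x := by
        gcongr
        exact le_gpDensity _ _ _ _

lemma tfGround_le_sq_mul_gpGround (hε : 0 < ε) (Ω₀ : ℝ) :
    tfGround Ω₀ ≤ ε ^ 2 * gpGround ε (Ω₀ / ε) := by
  rw [← div_le_iff₀' (by positivity)]
  obtain ⟨Ψ, hΨ⟩ := exists_gpAdm
  refine le_csInf ⟨_, _, hΨ, rfl⟩ ?_
  rintro _ ⟨Ψ, hΨ, rfl⟩
  rw [div_le_iff₀' (by positivity)]
  exact tfGround_le_sq_mul_gpEnergy hε hΨ Ω₀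

lemma gpGround_le_gpEnergy (hε : 0 < ε) (h : gpAdm Ψ) (Ω₀ : ℝ) :
    gpGround ε (Ω₀ / ε) ≤ gpEnergy ε (Ω₀ / ε) Ψ := by
  refine csInf_le ⟨tfGround Ω₀ / ε ^ 2, ?_⟩ ⟨Ψ, h, rfl⟩
  rintro _ ⟨Φ, hΦ, rfl⟩
  rw [div_le_iff₀' (by positivity)]
  exact tfGround_le_sq_mul_gpEnergy hε hΦ Ω₀

end Functionals

/-! ### Regularized Thomas-Fermi densities -/

section SoftPosPart

variable {η t : ℝ}

/-- A smooth approximation of the positive part of `t`: the positive root `m` of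
`m * (m - t) = η ^ 2 / 4`. -/
def softPosPart (η t : ℝ) : ℝ := (t + √(t ^ 2 + η ^ 2)) / 2

lemma abs_le_sqrt_sq_add_sq (η t : ℝ) : |t| ≤ √(t ^ 2 + η ^ 2) :=
  abs_le_sqrt (by linarith [sq_nonneg η])

lemma le_sqrt_sq_add_sq (η t : ℝ) : η ≤ √(t ^ 2 + η ^ 2) :=
  le_sqrt_of_sq_le (by linarith [sq_nonneg t])

lemma softPosPart_mul_sub (η t : ℝ) : softPosPart η t * (softPosPart η t - t) = η ^ 2 / 4 := by
  have hsq : √(t ^ 2 + η ^ 2) ^ 2 = t ^ 2 + η ^ 2 := sq_sqrt (by positivity)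
  unfold softPosPart
  linear_combination hsq / 4

lemma max_zero_le_softPosPart (η t : ℝ) : max t 0 ≤ softPosPart η t := by
  obtain ⟨hneg, hpos⟩ := abs_le.1 (abs_le_sqrt_sq_add_sq η t)
  unfold softPosPart
  exact max_le (by linarith) (by linarith)

lemma softPosPart_pos (hη : 0 < η) (t : ℝ) : 0 < softPosPart η t :=
  lt_of_le_of_ne ((le_max_right t 0).trans (max_zero_le_softPosPart η t)) fun h => by
    have := softPosPart_mul_sub η t
    rw [← h, zero_mul] at this
    exact absurd this (by positivity)

lemma softPosPart_le_sqrt (η t : ℝ) : softPosPart η t ≤ √(t ^ 2 + η ^ 2) := by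
  unfold softPosPart
  linarith [(abs_le.1 (abs_le_sqrt_sq_add_sq η t)).2]

lemma softPosPart_le_max_zero_add (hη : 0 ≤ η) (t : ℝ) : softPosPart η t ≤ max t 0 + η / 2 := by
  have hsqrt : √(t ^ 2 + η ^ 2) ≤ |t| + η := by
    refine sqrt_le_iff.2 ⟨by positivity, ?_⟩
    nlinarith [sq_abs t, mul_nonneg (abs_nonneg t) hη]
  have habs : |t| ≤ 2 * max t 0 - t :=
    abs_le'.2 ⟨by linarith [le_max_left t 0], by linarith [le_max_right t 0]⟩
  unfold softPosPart
  linarith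

lemma softPosPart_sq_sub_le (η t : ℝ) :
    softPosPart η t ^ 2 - 2 * t * softPosPart η t ≤ -max t 0 ^ 2 + η ^ 2 / 2 := by
  have hmul := softPosPart_mul_sub η t
  have hge := max_zero_le_softPosPart η t
  rcases le_total t 0 with ht | ht
  · rw [max_eq_right ht] at hge ⊢
    nlinarith
  · rw [max_eq_left ht] at hge ⊢
    nlinarith

lemma contDiff_softPosPart {n : WithTop ℕ∞} (hη : 0 < η) : ContDiff ℝ n (softPosPart η) := by
  have hsqrt : ContDiff ℝ n fun t : ℝ => √(t ^ 2 + η ^ 2) :=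
    ContDiff.sqrt (by fun_prop) fun t => by positivity
  exact (contDiff_id.add hsqrt).div_const 2

lemma hasDerivAt_sqrt_softPosPart (hη : 0 < η) (t : ℝ) :
    HasDerivAt (fun t => √(softPosPart η t)) (√(softPosPart η t) / (2 * √(t ^ 2 + η ^ 2))) t := by
  have hm := softPosPart_pos hη t
  have hpos : 0 < t ^ 2 + η ^ 2 := by positivity
  have hsqrt : √(softPosPart η t) ^ 2 = (t + √(t ^ 2 + η ^ 2)) / 2 := sq_sqrt hm.le
  have h := (((hasDerivAt_id t).add
    (((hasDerivAt_pow 2 t).add_const (η ^ 2)).sqrt hpos.ne')).div_const 2).sqrt hm.ne'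
  refine h.congr_deriv ?_
  change (1 + _ / (2 * √(t ^ 2 + η ^ 2))) / 2 / (2 * √(softPosPart η t)) = _
  field_simp
  rw [hsqrt]
  norm_num
  ring

lemma norm_fderiv_sqrt_softPosPart_comp_sq_le {E : Type*} [NormedAddCommGroup E]
    [NormedSpace ℝ E] {f : E → ℝ} {x : E} (hη : 0 < η) (hf : DifferentiableAt ℝ f x) :
    ‖fderiv ℝ (fun y => √(softPosPart η (f y))) x‖ ^ 2 ≤ ‖fderiv ℝ f x‖ ^ 2 / (4 * η) := by
  have h := (hasDerivAt_sqrt_softPosPart hη (f x)).comp_hasFDerivAt x hf.hasFDerivAt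
  simp only [Function.comp_def] at h
  rw [h.fderiv, norm_smul, mul_pow, norm_eq_abs, sq_abs, div_pow,
    sq_sqrt (softPosPart_pos hη _).le, mul_pow, div_eq_inv_mul (‖fderiv ℝ f x‖ ^ 2)]
  gcongr
  rw [div_le_iff₀ (by positivity)]
  have hη' := le_sqrt_sq_add_sq η (f x)
  have hm := softPosPart_le_sqrt η (f x)
  set r := √(f x ^ 2 + η ^ 2)
  calc softPosPart η (f x) ≤ r := hm
    _ ≤ η⁻¹ * r ^ 2 := by
        rw [← div_eq_inv_mul, le_div_iff₀ hη, sq]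
        gcongr
    _ = (4 * η)⁻¹ * (2 ^ 2 * r ^ 2) := by
        field_simp
        norm_num

end SoftPosPart

section TFProfile

variable {η l : ℝ}

lemma norm_fderiv_tfProfile (Ω₀ l : ℝ) (x : Pt) :
    ‖fderiv ℝ (tfProfile Ω₀ l) x‖ = Ω₀ ^ 2 / 4 * ‖x‖ := by
  have h : HasFDerivAt (tfProfile Ω₀ l) ((Ω₀ ^ 2 / 8) • (2 • innerSL ℝ x)) x := by
    refine (((hasStrictFDerivAt_norm_sq x).hasFDerivAt.const_smul (Ω₀ ^ 2 / 8)).const_add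
      (l / 2)).congr_of_eventuallyEq (.of_forall fun y => ?_)
    simp only [tfProfile, Pi.smul_apply, smul_eq_mul]
    ring
  rw [h.fderiv, norm_smul, ← Nat.cast_smul_eq_nsmul ℝ, norm_smul, innerSL_apply_norm,
    norm_of_nonneg (by positivity), norm_of_nonneg (by positivity)]
  push_cast
  ring

lemma continuous_softPosPart_tfProfile (hη : 0 < η) (Ω₀ : ℝ) :
    Continuous fun p : ℝ × Pt => softPosPart η (tfProfile Ω₀ p.1 p.2) := by
  have hm : Continuous (softPosPart η) := (contDiff_softPosPart (n := 0) hη).continuous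
  unfold tfProfile
  fun_prop

lemma tfProfile_le (hl : l ≤ 2) (Ω₀ : ℝ) {x : Pt} (hx : x ∈ B1) :
    tfProfile Ω₀ l x ≤ 1 + Ω₀ ^ 2 / 8 := by
  unfold tfProfile
  nlinarith [mul_le_mul_of_nonneg_left (norm_sq_lt_one_of_mem_B1 hx).le (sq_nonneg Ω₀)]

lemma softPosPart_tfProfile_le (hη : 0 ≤ η) (h1 : η ≤ 1) (hl : l ≤ 2) (Ω₀ : ℝ) {x : Pt}
    (hx : x ∈ B1) : softPosPart η (tfProfile Ω₀ l x) ≤ 2 + Ω₀ ^ 2 / 8 := by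
  have hmax : max (tfProfile Ω₀ l x) 0 ≤ 1 + Ω₀ ^ 2 / 8 :=
    max_le (tfProfile_le hl Ω₀ hx) (by positivity)
  linarith [softPosPart_le_max_zero_add hη (tfProfile Ω₀ l x)]

variable {q : Pt → ℝ}

lemma continuous_integral_softPosPart_tfProfile_mul (hη : 0 < η) (Ω₀ : ℝ) (hq : Continuous q) :
    Continuous fun l => ∫ x in B1, softPosPart η (tfProfile Ω₀ l x) * q x := by
  simp only [setIntegral_congr_set B1_ae_eq_closedBall]
  exact continuous_parametric_integral_of_continuous
    ((continuous_softPosPart_tfProfile hη Ω₀).mul (hq.comp continuous_snd))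
    (isCompact_closedBall 0 1)

lemma integrableOn_softPosPart_tfProfile_mul (hη : 0 < η) (Ω₀ l : ℝ) (hq : Continuous q) :
    IntegrableOn (fun x => softPosPart η (tfProfile Ω₀ l x) * q x) B1 :=
  integrableOn_B1_of_continuous
    (((continuous_softPosPart_tfProfile hη Ω₀).comp (.prodMk_right l)).mul hq)

lemma integral_softPosPart_tfProfile_mul_le_one (hη : 0 < η) (h1 : η ≤ 1) (Ω₀ : ℝ)
    (hq : Continuous q) (hq1 : ∀ x, q x ≤ 1) :
    ∫ x in B1, softPosPart η (tfProfile Ω₀ (-2 - Ω₀ ^ 2 / 4) x) * q x ≤ 1 := by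
  have hle : ∀ x ∈ B1, softPosPart η (tfProfile Ω₀ (-2 - Ω₀ ^ 2 / 4) x) * q x ≤ 1 / 4 := by
    intro x hx
    have hT : tfProfile Ω₀ (-2 - Ω₀ ^ 2 / 4) x ≤ -1 := by
      unfold tfProfile
      nlinarith [mul_le_mul_of_nonneg_left (norm_sq_lt_one_of_mem_B1 hx).le (sq_nonneg Ω₀)]
    have hmul := softPosPart_mul_sub η (tfProfile Ω₀ (-2 - Ω₀ ^ 2 / 4) x)
    have hpos := softPosPart_pos hη (tfProfile Ω₀ (-2 - Ω₀ ^ 2 / 4) x)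
    refine (mul_le_of_le_one_right hpos.le (hq1 x)).trans ?_
    nlinarith
  refine (setIntegral_mono_on (integrableOn_softPosPart_tfProfile_mul hη _ _ hq)
    (integrable_const _) measurableSet_B1 hle).trans ?_
  rw [setIntegral_B1_const]
  linarith [pi_lt_four]

lemma integral_le_integral_softPosPart_tfProfile_mul (hη : 0 < η) (Ω₀ : ℝ) (hq : Continuous q)
    (hq0 : ∀ x, 0 ≤ q x) :
    ∫ x in B1, q x ≤ ∫ x in B1, softPosPart η (tfProfile Ω₀ 2 x) * q x := by
  refine integral_mono (integrableOn_B1_of_continuous hq)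
    (integrableOn_softPosPart_tfProfile_mul hη _ _ hq) fun x => ?_
  have hT : 1 ≤ tfProfile Ω₀ 2 x := by
    have : 0 ≤ Ω₀ ^ 2 * ‖x‖ ^ 2 / 4 := by positivity
    unfold tfProfile
    linarith
  exact le_mul_of_one_le_left (hq0 x)
    (hT.trans ((le_max_left _ _).trans (max_zero_le_softPosPart η _)))

lemma exists_integral_softPosPart_tfProfile_mul_eq_one (hη : 0 < η) (h1 : η ≤ 1) (Ω₀ : ℝ)
    (hq : Continuous q) (hq0 : ∀ x, 0 ≤ q x) (hq1 : ∀ x, q x ≤ 1) (hmass : 1 ≤ ∫ x in B1, q x) :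
    ∃ l ≤ 2, ∫ x in B1, softPosPart η (tfProfile Ω₀ l x) * q x = 1 := by
  have hle : -2 - Ω₀ ^ 2 / 4 ≤ 2 := by linarith [sq_nonneg Ω₀]
  obtain ⟨l, hl, hl1⟩ := intermediate_value_Icc hle
    (continuous_integral_softPosPart_tfProfile_mul hη Ω₀ hq).continuousOn
    ⟨integral_softPosPart_tfProfile_mul_le_one hη h1 Ω₀ hq hq1,
      hmass.trans (integral_le_integral_softPosPart_tfProfile_mul hη Ω₀ hq hq0)⟩
  exact ⟨l, hl.2, hl1⟩

end TFProfile

/-! ### The trial function -/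

section TrialFunction

variable {Ω₀ l ε : ℝ}

/-- The trial function: a regularized Thomas-Fermi amplitude with chemical potential `l`, carrying
the phase of a lattice of vortices of density proportional to `Ω₀ / ε`. -/
def trialFunction (Ω₀ l ε : ℝ) (x : Pt) : ℂ :=
  √(softPosPart ε (tfProfile Ω₀ l x)) • regSign ε (vortexLattice (Ω₀ / ε) x)

lemma contDiff_sqrt_softPosPart_tfProfile (hε : 0 < ε) (Ω₀ l : ℝ) :
    ContDiff ℝ 1 fun x => √(softPosPart ε (tfProfile Ω₀ l x)) :=
  ((contDiff_softPosPart hε).comp contDiff_tfProfile).sqrt fun _ => (softPosPart_pos hε _).ne'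

lemma contDiff_trialFunction (hε : 0 < ε) (Ω₀ l : ℝ) : ContDiff ℝ 1 (trialFunction Ω₀ l ε) :=
  (contDiff_sqrt_softPosPart_tfProfile hε Ω₀ l).smul
    ((contDiff_regSign hε).comp (contDiff_vortexLattice _))

lemma norm_trialFunction_sq (hε : 0 < ε) (Ω₀ l : ℝ) (x : Pt) :
    ‖trialFunction Ω₀ l ε x‖ ^ 2 =
      softPosPart ε (tfProfile Ω₀ l x) * ‖regSign ε (vortexLattice (Ω₀ / ε) x)‖ ^ 2 := by
  rw [trialFunction, norm_smul, mul_pow, norm_of_nonneg (sqrt_nonneg _),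
    sq_sqrt (softPosPart_pos hε _).le]

lemma norm_covDeriv_trialFunction_sq_le (hΩ₀ : 0 ≤ Ω₀) (hε : 0 < ε) {x : Pt} (hx : x ∈ B1) :
    ‖covDeriv (symGauge (Ω₀ / ε)) (trialFunction Ω₀ l ε) x‖ ^ 2 ≤ Ω₀ ^ 4 / (32 * ε) +
      100 * π * (Ω₀ / ε) * softPosPart ε (tfProfile Ω₀ l x) *
        (‖vortexLattice (Ω₀ / ε) x‖ ^ 2 + ε)⁻¹ := by
  have hamp : ‖fderiv ℝ (fun y => √(softPosPart ε (tfProfile Ω₀ l y))) x‖ ^ 2 ≤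
      Ω₀ ^ 4 / (64 * ε) := by
    refine (norm_fderiv_sqrt_softPosPart_comp_sq_le hε
      ((contDiff_tfProfile (n := 1)).differentiable one_ne_zero x)).trans ?_
    rw [norm_fderiv_tfProfile, mul_pow]
    calc (Ω₀ ^ 2 / 4) ^ 2 * ‖x‖ ^ 2 / (4 * ε) ≤ (Ω₀ ^ 2 / 4) ^ 2 * 1 / (4 * ε) := by
          gcongr
          exact (norm_sq_lt_one_of_mem_B1 hx).le
      _ = Ω₀ ^ 4 / (64 * ε) := by ring
  have hphase := norm_covDeriv_vortexLattice_sq_le (Ω := Ω₀ / ε) (by positivity) x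
  calc ‖covDeriv (symGauge (Ω₀ / ε)) (trialFunction Ω₀ l ε) x‖ ^ 2
      ≤ 2 * ‖fderiv ℝ (fun y => √(softPosPart ε (tfProfile Ω₀ l y))) x‖ ^ 2 +
        8 * √(softPosPart ε (tfProfile Ω₀ l x)) ^ 2 *
          ‖covDeriv (symGauge (Ω₀ / ε)) (vortexLattice (Ω₀ / ε)) x‖ ^ 2 /
          (‖vortexLattice (Ω₀ / ε) x‖ ^ 2 + ε) :=
        norm_covDeriv_smul_regSign_sq_le _ hε
          ((contDiff_sqrt_softPosPart_tfProfile hε Ω₀ l).differentiable one_ne_zero x)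
          ((contDiff_vortexLattice _).differentiable one_ne_zero x)
    _ ≤ 2 * (Ω₀ ^ 4 / (64 * ε)) + 8 * softPosPart ε (tfProfile Ω₀ l x) *
          (25 * π / 2 * (Ω₀ / ε)) / (‖vortexLattice (Ω₀ / ε) x‖ ^ 2 + ε) := by
        have hm := softPosPart_pos hε (tfProfile Ω₀ l x)
        rw [sq_sqrt hm.le]
        gcongr
    _ = _ := by ring

lemma norm_trialFunction_pow_four_sub_le (hε : 0 < ε) (Ω₀ l : ℝ) (x : Pt) :
    ‖trialFunction Ω₀ l ε x‖ ^ 4 - Ω₀ ^ 2 * ‖x‖ ^ 2 / 4 * ‖trialFunction Ω₀ l ε x‖ ^ 2 ≤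
      -max (tfProfile Ω₀ l x) 0 ^ 2 + l * ‖trialFunction Ω₀ l ε x‖ ^ 2 + ε ^ 2 / 2 +
        softPosPart ε (tfProfile Ω₀ l x) ^ 2 *
          (ε * (‖vortexLattice (Ω₀ / ε) x‖ ^ 2 + ε)⁻¹) := by
  have hpot : Ω₀ ^ 2 * ‖x‖ ^ 2 / 4 = 2 * tfProfile Ω₀ l x - l := by
    unfold tfProfile
    ring
  have hm := softPosPart_pos hε (tfProfile Ω₀ l x)
  have hge := (le_max_left _ _).trans (max_zero_le_softPosPart ε (tfProfile Ω₀ l x))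
  have hle := softPosPart_sq_sub_le ε (tfProfile Ω₀ l x)
  have hσ0 : 0 ≤ ε * (‖vortexLattice (Ω₀ / ε) x‖ ^ 2 + ε)⁻¹ := by positivity
  have hσ1 : 0 ≤ 1 - ε * (‖vortexLattice (Ω₀ / ε) x‖ ^ 2 + ε)⁻¹ := by
    rw [← norm_regSign_sq_eq_one_sub hε]
    positivity
  rw [hpot, show 4 = 2 * 2 from rfl, pow_mul, norm_trialFunction_sq hε,
    norm_regSign_sq_eq_one_sub hε]
  set m := softPosPart ε (tfProfile Ω₀ l x)
  set σ := ε * (‖vortexLattice (Ω₀ / ε) x‖ ^ 2 + ε)⁻¹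
  have hcross := mul_nonneg (mul_nonneg hσ0 hm.le) (sub_nonneg.2 hge)
  have hsq := mul_nonneg (mul_nonneg hσ0 hσ1) (sq_nonneg m)
  linear_combination hle + 2 * hcross + hsq

/-- The constant controlling the energy excess of the trial function over the Thomas-Fermi energy;
`2 + Ω₀ ^ 2 / 8` is the bound on the density from `softPosPart_tfProfile_le`. -/
def trialErrorConst (Ω₀ : ℝ) : ℝ :=
  Ω₀ ^ 4 / 16 + 1 / 2 + (200 * π * Ω₀ * (2 + Ω₀ ^ 2 / 8) + (2 + Ω₀ ^ 2 / 8) ^ 2)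

lemma sq_mul_gpDensity_trialFunction_le (hΩ₀ : 0 ≤ Ω₀) (hε : 0 < ε) (h1 : ε ≤ 1) (hl : l ≤ 2)
    {x : Pt} (hx : x ∈ B1) :
    ε ^ 2 * gpDensity ε (Ω₀ / ε) (trialFunction Ω₀ l ε) x ≤
      -max (tfProfile Ω₀ l x) 0 ^ 2 + l * ‖trialFunction Ω₀ l ε x‖ ^ 2 +
        trialErrorConst Ω₀ * ε * (1 + (‖vortexLattice (Ω₀ / ε) x‖ ^ 2 + ε)⁻¹) := by
  have hkin := norm_covDeriv_trialFunction_sq_le (l := l) hΩ₀ hε hx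
  have hpot := norm_trialFunction_pow_four_sub_le hε Ω₀ l x
  have hm := softPosPart_pos hε (tfProfile Ω₀ l x)
  have hM := softPosPart_tfProfile_le hε.le h1 hl Ω₀ hx
  set m := softPosPart ε (tfProfile Ω₀ l x)
  set w := (‖vortexLattice (Ω₀ / ε) x‖ ^ 2 + ε)⁻¹
  have hconst : Ω₀ ^ 4 / 16 + ε / 2 ≤ trialErrorConst Ω₀ := by
    unfold trialErrorConst
    exact le_add_of_le_of_nonneg (by linarith) (by positivity)
  have hlattice : 200 * π * Ω₀ * m + m ^ 2 ≤ trialErrorConst Ω₀ := by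
    unfold trialErrorConst
    exact le_add_of_nonneg_of_le (by positivity) (by gcongr)
  calc ε ^ 2 * gpDensity ε (Ω₀ / ε) (trialFunction Ω₀ l ε) x
      ≤ 2 * ε ^ 2 * ‖covDeriv (symGauge (Ω₀ / ε)) (trialFunction Ω₀ l ε) x‖ ^ 2
          + (‖trialFunction Ω₀ l ε x‖ ^ 4
            - Ω₀ ^ 2 * ‖x‖ ^ 2 / 4 * ‖trialFunction Ω₀ l ε x‖ ^ 2) :=
        sq_mul_gpDensity_le hε _ _ _
    _ ≤ 2 * ε ^ 2 * (Ω₀ ^ 4 / (32 * ε) + 100 * π * (Ω₀ / ε) * m * w) +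
          (-max (tfProfile Ω₀ l x) 0 ^ 2 + l * ‖trialFunction Ω₀ l ε x‖ ^ 2 + ε ^ 2 / 2 +
            m ^ 2 * (ε * w)) := by gcongr
    _ = -max (tfProfile Ω₀ l x) 0 ^ 2 + l * ‖trialFunction Ω₀ l ε x‖ ^ 2 +
          ((Ω₀ ^ 4 / 16 + ε / 2) * ε + (200 * π * Ω₀ * m + m ^ 2) * ε * w) := by
        field_simp
        ring
    _ ≤ -max (tfProfile Ω₀ l x) 0 ^ 2 + l * ‖trialFunction Ω₀ l ε x‖ ^ 2 +
          (trialErrorConst Ω₀ * ε + trialErrorConst Ω₀ * ε * w) := by gcongr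
    _ = _ := by ring

lemma trialErrorConst_nonneg (hΩ₀ : 0 ≤ Ω₀) : 0 ≤ trialErrorConst Ω₀ := by
  unfold trialErrorConst
  positivity

lemma one_le_abs_log (hε : 0 < ε) (h4 : ε ≤ 1 / 4) : 1 ≤ |log ε| := by
  have hlog : log ε ≤ -1 := by
    rw [log_le_iff_le_exp hε, exp_neg]
    refine h4.trans ?_
    rw [one_div]
    gcongr
    linarith [exp_one_lt_d9]
  linarith [neg_le_abs (log ε)]

lemma sq_mul_gpEnergy_trialFunction_le (hΩ₀ : 0 ≤ Ω₀) (hε : 0 < ε) (h4 : ε ≤ 1 / 4)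
    (hΩ : 2 * π ≤ Ω₀ / ε) (hl : l ≤ 2) (hmass : ∫ x in B1, ‖trialFunction Ω₀ l ε x‖ ^ 2 = 1) :
    ε ^ 2 * gpEnergy ε (Ω₀ / ε) (trialFunction Ω₀ l ε) ≤
      tfGround Ω₀ + 58 * trialErrorConst Ω₀ * ε * |log ε| := by
  have hΨ := (contDiff_trialFunction hε Ω₀ l).continuous
  have hT : Continuous (tfProfile Ω₀ l) := (contDiff_tfProfile (n := 0)).continuous
  have hw := continuous_inv_norm_vortexLattice_sq_add hε (Ω₀ / ε)
  have htf : IntegrableOn (fun x => -max (tfProfile Ω₀ l x) 0 ^ 2) B1 :=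
    integrableOn_B1_of_continuous (by fun_prop)
  have hsq : IntegrableOn (fun x => l * ‖trialFunction Ω₀ l ε x‖ ^ 2) B1 :=
    integrableOn_B1_of_continuous (by fun_prop)
  have hsum : IntegrableOn
      (fun x => -max (tfProfile Ω₀ l x) 0 ^ 2 + l * ‖trialFunction Ω₀ l ε x‖ ^ 2) B1 := htf.add hsq
  have herr : IntegrableOn (fun x => trialErrorConst Ω₀ * ε *
      (1 + (‖vortexLattice (Ω₀ / ε) x‖ ^ 2 + ε)⁻¹)) B1 :=
    integrableOn_B1_of_continuous (by fun_prop)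
  have hadm := gpAdm_of_contDiff (contDiff_trialFunction hε Ω₀ l) hmass
  have hC := trialErrorConst_nonneg hΩ₀
  calc ε ^ 2 * gpEnergy ε (Ω₀ / ε) (trialFunction Ω₀ l ε)
      ≤ ∫ x in B1, (-max (tfProfile Ω₀ l x) 0 ^ 2 + l * ‖trialFunction Ω₀ l ε x‖ ^ 2 +
          trialErrorConst Ω₀ * ε * (1 + (‖vortexLattice (Ω₀ / ε) x‖ ^ 2 + ε)⁻¹)) := by
        rw [gpEnergy, ← integral_const_mul]
        exact setIntegral_mono_on ((integrableOn_gpDensity hadm _ _).const_mul _)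
          (hsum.add herr) measurableSet_B1 fun x hx =>
            sq_mul_gpDensity_trialFunction_le hΩ₀ hε (by linarith) hl hx
    _ = (∫ x in B1, -max (tfProfile Ω₀ l x) 0 ^ 2) + l + trialErrorConst Ω₀ * ε *
          (π + ∫ x in B1, (‖vortexLattice (Ω₀ / ε) x‖ ^ 2 + ε)⁻¹) := by
        rw [integral_add hsum herr, integral_add htf hsq, integral_const_mul,
          integral_const_mul, hmass, mul_one, integral_add (integrable_const _)
          (integrableOn_B1_of_continuous hw), setIntegral_B1_const, mul_one]
    _ ≤ tfGround Ω₀ + trialErrorConst Ω₀ * ε * (4 * |log ε| + 54 * |log ε|) := by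
        gcongr
        · exact integral_neg_sq_add_le_tfGround Ω₀ l
        · linarith [pi_lt_four, one_le_abs_log hε h4]
        · exact setIntegral_inv_norm_vortexLattice_sq_add_le hε h4 hΩ
    _ = _ := by ring

lemma exists_integral_norm_trialFunction_sq_eq_one (hε : 0 < ε) (h4 : ε ≤ 1 / 4)
    (hΩ : 2 * π ≤ Ω₀ / ε) (hlog : 54 * (ε * |log ε|) ≤ 2) :
    ∃ l ≤ 2, ∫ x in B1, ‖trialFunction Ω₀ l ε x‖ ^ 2 = 1 := by
  have hw := continuous_inv_norm_vortexLattice_sq_add hε (Ω₀ / ε)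
  simp only [norm_trialFunction_sq hε]
  refine exists_integral_softPosPart_tfProfile_mul_eq_one hε (by linarith) Ω₀ ?_
    (fun x => sq_nonneg _)
    (fun x => pow_le_one₀ (norm_nonneg _) (norm_regSign_le_one hε.le _)) ?_
  · exact (((contDiff_regSign hε).comp (contDiff_vortexLattice _)).continuous.norm).pow 2
  · have hint := setIntegral_inv_norm_vortexLattice_sq_add_le hε h4 hΩ
    simp only [norm_regSign_sq_eq_one_sub hε]
    rw [integral_sub (integrable_const _) (integrableOn_B1_of_continuous (by fun_prop)),
      setIntegral_B1_const, integral_const_mul]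
    nlinarith [pi_gt_three]

lemma sq_mul_gpGround_le (hΩ₀ : 0 ≤ Ω₀) (hε : 0 < ε) (h4 : ε ≤ 1 / 4) (hΩ : 2 * π ≤ Ω₀ / ε)
    (hlog : 54 * (ε * |log ε|) ≤ 2) :
    ε ^ 2 * gpGround ε (Ω₀ / ε) ≤ tfGround Ω₀ + 58 * trialErrorConst Ω₀ * ε * |log ε| := by
  obtain ⟨l, hl, hmass⟩ := exists_integral_norm_trialFunction_sq_eq_one hε h4 hΩ hlog
  have hadm := gpAdm_of_contDiff (contDiff_trialFunction hε Ω₀ l) hmass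
  refine le_trans ?_ (sq_mul_gpEnergy_trialFunction_le hΩ₀ hε h4 hΩ hl hmass)
  gcongr
  exact gpGround_le_gpEnergy hε hadm Ω₀

end TrialFunction

lemma tendsto_mul_abs_log_nhdsGT_zero : Tendsto (fun ε : ℝ => ε * |log ε|) (𝓝[>] 0) (𝓝 0) := by
  have h : Tendsto (fun ε : ℝ => |ε * log ε|) (𝓝[>] 0) (𝓝 |0 * log 0|) :=
    (continuous_mul_log.abs.tendsto 0).mono_left nhdsWithin_le_nhds
  rw [zero_mul, abs_zero] at h
  refine h.congr' ?_
  filter_upwards [self_mem_nhdsWithin] with ε hε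
  rw [abs_mul, abs_of_pos hε]

theorem stmt8 (Ω₀ : ℝ) (hΩ : 0 < Ω₀) :
    ∃ (C ε₀ : ℝ), 0 < ε₀ ∧ ∀ ε : ℝ, 0 < ε → ε < ε₀ →
      tfGround Ω₀ ≤ ε ^ 2 * gpGround ε (Ω₀ / ε) ∧
      ε ^ 2 * gpGround ε (Ω₀ / ε) ≤ tfGround Ω₀ + C * ε * |Real.log ε| := by
  have hsmall : ∀ᶠ ε : ℝ in 𝓝[>] 0, ε ≤ 1 / 4 :=
    nhdsWithin_le_nhds (Iic_mem_nhds (by norm_num))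
  have hfast : ∀ᶠ ε : ℝ in 𝓝[>] 0, 2 * π ≤ Ω₀ / ε :=
    (tendsto_inv_nhdsGT_zero.const_mul_atTop hΩ).eventually_ge_atTop _
  have hlog : ∀ᶠ ε : ℝ in 𝓝[>] 0, ε * |log ε| ≤ 1 / 27 :=
    tendsto_mul_abs_log_nhdsGT_zero.eventually_le_const (by norm_num)
  obtain ⟨ε₀, hε₀, hsub⟩ := mem_nhdsGT_iff_exists_Ioo_subset.1 (hsmall.and (hfast.and hlog))
  refine ⟨58 * trialErrorConst Ω₀, ε₀, hε₀, fun ε hε hε' => ?_⟩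
  obtain ⟨h4, hrot, hεlog⟩ := hsub ⟨hε, hε'⟩
  exact ⟨tfGround_le_sq_mul_gpGround hε Ω₀,
    sq_mul_gpGround_le hΩ.le hε h4 hrot (by linarith)⟩
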